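/- Assume (SA0)–(SA2). Then there exist constants d > 0 and γ̄ ≥ 0 such that for every ξ ≥ 0, defining the cooling schedule γ_i := log(i+1)/(d(1+ξ)) + γ̄ and the kernels P_i := K_{γ_i}, for every initial probability measure μ on ℝ one has lim_{n→∞} ‖μ P_1 ⋯ P_n − π_{γ_n}‖_TV = 0. -/

import Mathlib

/-!
A Foster–Lyapunov and minorization argument, run along the cooling schedule. Normalize `f` by a
constant so that `α |x| ≤ f x`, and let `V = exp f`.

For large `γ` the kernels `K_γ` satisfy one drift condition `K_γ V ≤ (1 - δ) V + B`: a proposal that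
goes downhill is always accepted, while uphill moves, where the acceptance probability
`exp (-γ (f y - f x))` beats the growth of `V`, add at most `V / (γ - 1)`. On the sublevel set
`{V ≤ 4 B / δ}` they have a common minorant of mass `ε = q₀ exp (-D γ)`, where `D` bounds `f` on
`[0, 1]`. Hence `K_γ` contracts the total variation distance with weight `1 + (ε / 2B) V` by the
factor `1 - ε δ / 4` (Hairer–Mattingly). As `γ` increases these weights decrease, so the
contractions along the schedule compose.

The targets move by at most a multiple of `(γ' - γ) exp (2 D γ')` from `γ` to `γ'`. With
`γ_n = log (n + 1) / c + γbar` and `c > 3 D`, this displacement is `o(ε_n)`, while `∑ ε_n = ∞`, so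
the weighted distance to the moving target tends to `0`. This needs `V` to be integrable under `μ`;
a general `μ` is approximated in total variation by conditioning it on sublevel sets of `V`.
-/

open MeasureTheory ProbabilityTheory Set
open scoped ENNReal

/-- The `f`-total variation distance (for `f ≡ 1`, the total variation norm). -/
noncomputable def fDist {X : Type*} [MeasurableSpace X] (f : X → ℝ) (μ ν : Measure X) : ℝ≥0∞ :=
  ⨆ (φ : X → ℝ) (_ : Measurable φ) (_ : ∀ x, |φ x| ≤ f x) (_ : Integrable φ μ)
    (_ : Integrable φ ν), ENNReal.ofReal |∫ x, φ x ∂μ - ∫ x, φ x ∂ν|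

/-- `iterMeasNH P ξ n = ξ P₁ ⋯ Pₙ`. -/
noncomputable def iterMeasNH {X : Type*} [MeasurableSpace X] (P : ℕ → Kernel X X)
    (ξ : Measure X) : ℕ → Measure X
  | 0 => ξ
  | n + 1 => (iterMeasNH P ξ n).bind (fun x => P (n + 1) x)

/-- The random walk Metropolis–Hastings kernel `K_γ`. -/
noncomputable def rwmKernel (f q : ℝ → ℝ) (γ x : ℝ) : Measure ℝ :=
  volume.withDensity
      (fun y => ENNReal.ofReal (min 1 (Real.exp (-γ * (f y - f x))) * q (y - x))) +
    (∫⁻ y, ENNReal.ofReal ((1 - min 1 (Real.exp (-γ * (f y - f x)))) * q (y - x))) •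
      Measure.dirac x

/-- The Gibbs measure `π_γ(dx) ∝ exp(-γ f(x)) dx`. -/
noncomputable def gibbs (f : ℝ → ℝ) (γ : ℝ) : Measure ℝ :=
  (∫⁻ x, ENNReal.ofReal (Real.exp (-γ * f x)))⁻¹ •
    volume.withDensity (fun x => ENNReal.ofReal (Real.exp (-γ * f x)))

section WeightedTotalVariation

variable {X Y : Type*} [MeasurableSpace X] [MeasurableSpace Y] {W W' : X → ℝ}
  {μ ν ρ η : Measure X}

lemma fDist_le_ofReal {r : ℝ}
    (h : ∀ φ : X → ℝ, Measurable φ → (∀ x, |φ x| ≤ W x) → Integrable φ μ → Integrable φ ν →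
      |∫ x, φ x ∂μ - ∫ x, φ x ∂ν| ≤ r) :
    fDist W μ ν ≤ ENNReal.ofReal r := by
  simp only [fDist, iSup_le_iff]
  exact fun φ hφ hφW hμ hν => ENNReal.ofReal_le_ofReal (h φ hφ hφW hμ hν)

lemma ofReal_abs_integral_sub_le_fDist {φ : X → ℝ} (hφ : Measurable φ) (hφW : ∀ x, |φ x| ≤ W x)
    (hμ : Integrable φ μ) (hν : Integrable φ ν) :
    ENNReal.ofReal |∫ x, φ x ∂μ - ∫ x, φ x ∂ν| ≤ fDist W μ ν :=
  le_iSup₂_of_le φ hφ <| le_iSup₂_of_le hφW hμ <| le_iSup_of_le hν le_rfl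

lemma integrable_of_abs_le {φ : X → ℝ} (hφ : Measurable φ) (hφW : ∀ x, |φ x| ≤ W x)
    (hW : Integrable W μ) : Integrable φ μ :=
  hW.mono' hφ.aestronglyMeasurable (ae_of_all _ hφW)

lemma fDist_mono_weight (h : ∀ x, W x ≤ W' x) : fDist W μ ν ≤ fDist W' μ ν := by
  simp only [fDist, iSup_le_iff]
  exact fun φ hφ hφW hμ hν =>
    ofReal_abs_integral_sub_le_fDist hφ (fun x => (hφW x).trans (h x)) hμ hν

lemma fDist_triangle (hW : Integrable W ν) : fDist W μ ρ ≤ fDist W μ ν + fDist W ν ρ := by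
  simp only [fDist.eq_1 W μ ρ, iSup_le_iff]
  intro φ hφ hφW hμ hρ
  have hν := integrable_of_abs_le hφ hφW hW
  calc ENNReal.ofReal |∫ x, φ x ∂μ - ∫ x, φ x ∂ρ|
      ≤ ENNReal.ofReal (|∫ x, φ x ∂μ - ∫ x, φ x ∂ν| + |∫ x, φ x ∂ν - ∫ x, φ x ∂ρ|) :=
        ENNReal.ofReal_le_ofReal (abs_sub_le _ _ _)
    _ = ENNReal.ofReal |∫ x, φ x ∂μ - ∫ x, φ x ∂ν|
        + ENNReal.ofReal |∫ x, φ x ∂ν - ∫ x, φ x ∂ρ| :=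
        ENNReal.ofReal_add (abs_nonneg _) (abs_nonneg _)
    _ ≤ fDist W μ ν + fDist W ν ρ :=
        add_le_add (ofReal_abs_integral_sub_le_fDist hφ hφW hμ hν)
          (ofReal_abs_integral_sub_le_fDist hφ hφW hν hρ)

lemma abs_integral_sub_le_of_measure_le {φ : X → ℝ} (hle : η ≤ μ) (hφ : Integrable φ μ)
    (hW : Integrable W μ) (hφW : ∀ x, |φ x| ≤ W x) :
    |∫ x, φ x ∂μ - ∫ x, φ x ∂η| ≤ ∫ x, W x ∂μ - ∫ x, W x ∂η := by
  have hadd : ∫ x, (W x + φ x) ∂η ≤ ∫ x, (W x + φ x) ∂μ :=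
    integral_mono_measure hle
      (ae_of_all _ fun x => neg_le_iff_add_nonneg'.1 (neg_le_of_abs_le (hφW x))) (hW.add hφ)
  have hsub : ∫ x, (W x - φ x) ∂η ≤ ∫ x, (W x - φ x) ∂μ :=
    integral_mono_measure hle
      (ae_of_all _ fun x => sub_nonneg.2 (le_of_abs_le (hφW x))) (hW.sub hφ)
  rw [integral_add hW hφ, integral_add (hW.mono_measure hle) (hφ.mono_measure hle)] at hadd
  rw [integral_sub hW hφ, integral_sub (hW.mono_measure hle) (hφ.mono_measure hle)] at hsub
  rw [abs_le]
  constructor <;> linarith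

lemma fDist_le_of_common_minorant (hμ : η ≤ μ) (hν : η ≤ ν) (hWμ : Integrable W μ)
    (hWν : Integrable W ν) :
    fDist W μ ν ≤ ENNReal.ofReal
      ((∫ x, W x ∂μ - ∫ x, W x ∂η) + (∫ x, W x ∂ν - ∫ x, W x ∂η)) := by
  refine fDist_le_ofReal fun φ _ hφW hφμ hφν => ?_
  refine (abs_sub_le _ (∫ x, φ x ∂η) _).trans (add_le_add ?_ ?_)
  · exact abs_integral_sub_le_of_measure_le hμ hφμ hWμ hφW
  · rw [abs_sub_comm]
    exact abs_integral_sub_le_of_measure_le hν hφν hWν hφW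

lemma fDist_le_integral_add_integral (hμ : Integrable W μ) (hν : Integrable W ν) :
    fDist W μ ν ≤ ENNReal.ofReal (∫ x, W x ∂μ + ∫ x, W x ∂ν) := by
  simpa using fDist_le_of_common_minorant (η := 0) (Measure.zero_le μ) (Measure.zero_le ν) hμ hν

lemma exists_abs_sub_le_of_forall_abs_sub_le_add {ι : Type*} [Nonempty ι] {ψ u : ι → ℝ}
    (h : ∀ x y, |ψ x - ψ y| ≤ u x + u y) : ∃ a, ∀ x, |ψ x - a| ≤ u x := by
  have hle : ∀ x y, ψ y - u y ≤ ψ x + u x := fun x y => by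
    linarith [neg_le_of_abs_le (h x y)]
  have hbdd : BddAbove (range fun y => ψ y - u y) :=
    ⟨_, forall_mem_range.2 (hle (Classical.arbitrary ι))⟩
  refine ⟨⨆ y, (ψ y - u y), fun x => abs_le.2 ⟨?_, ?_⟩⟩
  · linarith [ciSup_le (hle x)]
  · linarith [le_ciSup hbdd x]

lemma ofReal_abs_integral_sub_le_mul_fDist [IsProbabilityMeasure μ] [IsProbabilityMeasure ν]
    {ψ : X → ℝ} {a c : ℝ} (hc : 0 < c) (hψ : Measurable ψ) (h : ∀ x, |ψ x - a| ≤ c * W x)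
    (hψμ : Integrable ψ μ) (hψν : Integrable ψ ν) :
    ENNReal.ofReal |∫ x, ψ x ∂μ - ∫ x, ψ x ∂ν| ≤ ENNReal.ofReal c * fDist W μ ν := by
  have hW : ∀ x, |c⁻¹ * (ψ x - a)| ≤ W x := fun x => by
    rw [abs_mul, abs_of_pos (inv_pos.2 hc), inv_mul_le_iff₀ hc]
    exact h x
  have hintegral : ∀ κ : Measure X, [IsProbabilityMeasure κ] → Integrable ψ κ →
      ∫ x, c⁻¹ * (ψ x - a) ∂κ = c⁻¹ * (∫ x, ψ x ∂κ - a) := fun κ _ hψκ => by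
    rw [integral_const_mul, integral_sub hψκ (integrable_const a)]
    simp
  have hscale : |∫ x, ψ x ∂μ - ∫ x, ψ x ∂ν|
      = c * |∫ x, c⁻¹ * (ψ x - a) ∂μ - ∫ x, c⁻¹ * (ψ x - a) ∂ν| := by
    rw [hintegral μ hψμ, hintegral ν hψν, ← mul_sub, sub_sub_sub_cancel_right, abs_mul,
      abs_of_pos (inv_pos.2 hc), mul_inv_cancel_left₀ hc.ne']
  rw [hscale, ENNReal.ofReal_mul hc.le]
  gcongr
  exact ofReal_abs_integral_sub_le_fDist ((hψ.sub_const a).const_mul c⁻¹) hW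
    ((hψμ.sub (integrable_const a)).const_mul c⁻¹) ((hψν.sub (integrable_const a)).const_mul c⁻¹)

lemma integral_comp_measure {κ : Kernel X Y} {φ : Y → ℝ}
    (hφ : Integrable φ (κ ∘ₘ μ)) : ∫ y, φ y ∂(κ ∘ₘ μ) = ∫ x, ∫ y, φ y ∂(κ x) ∂μ := by
  rw [Measure.comp_eq_comp_const_apply] at hφ ⊢
  rw [Kernel.integral_comp hφ]
  simp

lemma integrable_integral_comp_measure {κ : Kernel X Y}
    {φ : Y → ℝ} (hφ : Integrable φ (κ ∘ₘ μ)) : Integrable (fun x => ∫ y, φ y ∂(κ x)) μ := by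
  rw [Measure.comp_eq_comp_const_apply] at hφ
  exact Kernel.const_apply μ () ▸ hφ.integral_comp

/-- Up to an additive constant, `x ↦ ∫ φ dκ(x)` is bounded by `c * W`: the `W`-weighted distance is
dual to the seminorm `sup |ψ x - ψ y| / (W x + W y)`, which constants do not affect. -/
lemma fDist_comp_le_mul_of_forall {κ : Kernel X Y} [IsMarkovKernel κ] [IsProbabilityMeasure μ]
    [IsProbabilityMeasure ν] {U : Y → ℝ} {c : ℝ} (hc : 0 < c) (hW0 : ∀ x, 0 ≤ W x)
    (hU : ∀ x, Integrable U (κ x))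
    (hκ : ∀ x y, fDist U (κ x) (κ y) ≤ ENNReal.ofReal (c * (W x + W y))) :
    fDist U (κ ∘ₘ μ) (κ ∘ₘ ν) ≤ ENNReal.ofReal c * fDist W μ ν := by
  simp only [fDist.eq_1 U (κ ∘ₘ μ), iSup_le_iff]
  intro φ hφ hφU hφμ hφν
  have hφκ : ∀ x, Integrable φ (κ x) := fun x => integrable_of_abs_le hφ hφU (hU x)
  have hosc : ∀ x y, |∫ z, φ z ∂κ x - ∫ z, φ z ∂κ y| ≤ c * W x + c * W y := fun x y => by
    rw [← mul_add, ← ENNReal.ofReal_le_ofReal_iff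
      (mul_nonneg hc.le (add_nonneg (hW0 x) (hW0 y)))]
    exact (ofReal_abs_integral_sub_le_fDist hφ hφU (hφκ x) (hφκ y)).trans (hκ x y)
  have : Nonempty X := μ.nonempty_of_neZero
  obtain ⟨a, ha⟩ := exists_abs_sub_le_of_forall_abs_sub_le_add hosc
  rw [integral_comp_measure hφμ, integral_comp_measure hφν]
  exact ofReal_abs_integral_sub_le_mul_fDist hc
    (StronglyMeasurable.integral_kernel hφ.stronglyMeasurable).measurable ha
    (integrable_integral_comp_measure hφμ) (integrable_integral_comp_measure hφν)

lemma fDist_one_comp_le {κ : Kernel X Y} [IsMarkovKernel κ] [IsProbabilityMeasure μ]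
    [IsProbabilityMeasure ν] :
    fDist (fun _ => 1) (κ ∘ₘ μ) (κ ∘ₘ ν) ≤ fDist (fun _ => 1) μ ν := by
  have h : ∀ x y, fDist (fun _ => 1) (κ x) (κ y) ≤ ENNReal.ofReal (1 * (1 + 1)) := fun x y => by
    simpa using fDist_le_integral_add_integral (μ := κ x) (ν := κ y)
      (integrable_const (1 : ℝ)) (integrable_const 1)
  simpa using fDist_comp_le_mul_of_forall (μ := μ) (ν := ν) one_pos (fun _ => zero_le_one)
    (fun _ => integrable_const 1) h

lemma fDist_one_cond_le [IsProbabilityMeasure μ] {s : Set X} (hμs : μ s ≠ 0) :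
    fDist (fun _ => 1) μ μ[|s] ≤ ENNReal.ofReal (2 * (1 - μ.real s)) := by
  have : IsProbabilityMeasure μ[|s] := cond_isProbabilityMeasure hμs
  have hle : μ.restrict s ≤ μ[|s] := by
    rw [ProbabilityTheory.cond]
    calc μ.restrict s = (1 : ℝ≥0∞) • μ.restrict s := (one_smul _ _).symm
      _ ≤ (μ s)⁻¹ • μ.restrict s := by gcongr; exact ENNReal.one_le_inv.2 prob_le_one
  have h := fDist_le_of_common_minorant (W := fun _ => 1) Measure.restrict_le_self hle
    (integrable_const 1) (integrable_const 1)
  simpa [two_mul] using h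

lemma exists_isProbabilityMeasure_integrable_fDist_one_le [IsProbabilityMeasure μ] {V : X → ℝ}
    (hV : Measurable V) (hV0 : ∀ x, 0 ≤ V x) {e : ℝ≥0∞} (he : e ≠ 0) :
    ∃ ν : Measure X, IsProbabilityMeasure ν ∧ Integrable V ν ∧ fDist (fun _ => 1) μ ν ≤ e := by
  have hunion : ⋃ n : ℕ, {x | V x ≤ n} = univ := by ext x; simpa using exists_nat_ge (V x)
  have hmono : Monotone fun n : ℕ => {x | V x ≤ n} := fun m n hmn x (hx : V x ≤ m) =>
    hx.trans (Nat.cast_le.2 hmn)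
  have hμ : Filter.Tendsto (fun n : ℕ => μ.real {x | V x ≤ n}) Filter.atTop (nhds 1) := by
    simpa [hunion, measureReal_def, Function.comp_def] using
      (ENNReal.tendsto_toReal (measure_ne_top μ _)).comp (tendsto_measure_iUnion_atTop hmono)
  have hlim : Filter.Tendsto (fun n : ℕ => ENNReal.ofReal (2 * (1 - μ.real {x | V x ≤ n})))
      Filter.atTop (nhds 0) := by
    simpa using ENNReal.tendsto_ofReal ((hμ.const_sub 1).const_mul 2)
  obtain ⟨n, hn0, hne⟩ := ((hμ.eventually_const_lt one_pos).and
    (hlim.eventually_le_const (pos_iff_ne_zero.2 he))).exists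
  have hs : MeasurableSet {x | V x ≤ n} := measurableSet_le hV measurable_const
  have hs0 : μ {x | V x ≤ n} ≠ 0 := fun h => by simp [measureReal_def, h] at hn0
  have : IsProbabilityMeasure μ[|{x | V x ≤ n}] := cond_isProbabilityMeasure hs0
  refine ⟨_, this, ?_, (fDist_one_cond_le hs0).trans hne⟩
  refine (integrable_const (n : ℝ)).mono' hV.aestronglyMeasurable ?_
  filter_upwards [ae_cond_mem hs] with x hx
  rwa [Real.norm_of_nonneg (hV0 x)]

end WeightedTotalVariation

section Recursion

open Filter Topology

lemma tendsto_zero_of_le_one_sub_mul {b θ : ℕ → ℝ} (hb : ∀ n, 0 ≤ b n)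
    (hrec : ∀ᶠ n in atTop, b (n + 1) ≤ (1 - θ n) * b n)
    (hθ : Tendsto (fun n => ∑ i ∈ Finset.range n, θ i) atTop atTop) :
    Tendsto b atTop (𝓝 0) := by
  obtain ⟨N, hN⟩ := eventually_atTop.1 hrec
  have hstep : ∀ n ≥ N, Real.exp (∑ i ∈ Finset.range (n + 1), θ i) * b (n + 1)
      ≤ Real.exp (∑ i ∈ Finset.range n, θ i) * b n := fun n hn => by
    calc Real.exp (∑ i ∈ Finset.range (n + 1), θ i) * b (n + 1)
        ≤ Real.exp (∑ i ∈ Finset.range (n + 1), θ i) * (Real.exp (-θ n) * b n) := by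
          gcongr
          exact (hN n hn).trans
            (mul_le_mul_of_nonneg_right (Real.one_sub_le_exp_neg _) (hb n))
      _ = Real.exp (∑ i ∈ Finset.range n, θ i) * b n := by
          rw [← mul_assoc, ← Real.exp_add, Finset.sum_range_succ, add_neg_cancel_right]
  have hbound : ∀ n ≥ N, b n ≤ Real.exp (-∑ i ∈ Finset.range n, θ i)
      * (Real.exp (∑ i ∈ Finset.range N, θ i) * b N) := fun n hn => by
    rw [Real.exp_neg, le_inv_mul_iff₀ (Real.exp_pos _)]
    induction n, hn using Nat.le_induction with
    | base => exact le_rfl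
    | succ n hn ih => exact (hstep n hn).trans ih
  refine squeeze_zero' (Eventually.of_forall hb) (eventually_atTop.2 ⟨N, hbound⟩) ?_
  simpa using (Real.tendsto_exp_neg_atTop_nhds_zero.comp hθ).mul_const _

lemma tendsto_zero_of_le_one_sub_mul_add {a θ s : ℕ → ℝ} (ha : ∀ n, 0 ≤ a n)
    (hθ0 : ∀ n, 0 ≤ θ n) (hθ1 : ∀ n, θ n ≤ 1)
    (hrec : ∀ n, a (n + 1) ≤ (1 - θ n) * a n + θ n * s n) (hs : Tendsto s atTop (𝓝 0))
    (hθ : Tendsto (fun n => ∑ i ∈ Finset.range n, θ i) atTop atTop) :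
    Tendsto a atTop (𝓝 0) := by
  have hexcess : ∀ e > 0, Tendsto (fun n => max (a n - e) 0) atTop (𝓝 0) := fun e he => by
    refine tendsto_zero_of_le_one_sub_mul (fun n => le_max_right _ _) ?_ hθ
    filter_upwards [hs.eventually_le_const he] with n hn
    rw [mul_max_of_nonneg _ _ (sub_nonneg.2 (hθ1 n)), mul_zero]
    exact max_le_max_right 0 (by linarith [hrec n, mul_le_mul_of_nonneg_left hn (hθ0 n)])
  refine (nhds_basis_Ioo_pos (0 : ℝ)).tendsto_right_iff.2 fun e he => ?_
  filter_upwards [(hexcess (e / 2) (half_pos he)).eventually_lt_const (half_pos he)] with n hn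
  exact ⟨by linarith [ha n], by linarith [le_max_left (a n - e / 2) 0]⟩

end Recursion

section Harris

variable {X : Type*} {V : X → ℝ} {δ B ε : ℝ}

/-- The weight `1 + (ε / 2B) V`. Its scale is chosen so that the additive constant `B` of the drift
condition costs `ε / 2` per step, half of what minorization with mass `ε` gains. -/
noncomputable def driftWeight (V : X → ℝ) (B ε : ℝ) (x : X) : ℝ := 1 + ε / (2 * B) * V x

lemma one_le_driftWeight (hV0 : ∀ x, 0 ≤ V x) (hB : 0 ≤ B) (hε : 0 ≤ ε) (x : X) :
    1 ≤ driftWeight V B ε x :=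
  le_add_of_nonneg_right (mul_nonneg (by positivity) (hV0 x))

lemma driftWeight_mono {ε' : ℝ} (hV0 : ∀ x, 0 ≤ V x) (hB : 0 ≤ B) (h : ε ≤ ε') (x : X) :
    driftWeight V B ε x ≤ driftWeight V B ε' x := by
  have := hV0 x
  unfold driftWeight
  gcongr

variable [MeasurableSpace X] {κ : Kernel X X}

/-- The geometric (Foster–Lyapunov) drift condition `κ V ≤ (1 - δ) V + B`. Integrability is a field
because the Bochner integral of a non-integrable `V` would be `0`. -/
structure GeometricDrift (V : X → ℝ) (δ B : ℝ) (κ : X → Measure X) : Prop where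
  integrable : ∀ x, Integrable V (κ x)
  integral_le : ∀ x, ∫ y, V y ∂κ x ≤ (1 - δ) * V x + B

/-- `C` is a small set for `κ`, with minorization mass `ε`: the measures `κ x`, for `x ∈ C`, have a
common minorant of mass at least `ε`. -/
def IsSmallSet (κ : X → Measure X) (C : Set X) (ε : ℝ) : Prop :=
  ∃ η : Measure X, ε ≤ η.real univ ∧ ∀ x ∈ C, η ≤ κ x

lemma integrable_driftWeight {μ : Measure X} [IsFiniteMeasure μ] (hV : Integrable V μ) (B ε : ℝ) :
    Integrable (driftWeight V B ε) μ :=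
  (integrable_const 1).add (hV.const_mul _)

lemma integral_driftWeight_le [IsMarkovKernel κ] (hκ : GeometricDrift V δ B κ) (hB : 0 < B)
    (hε : 0 ≤ ε) (x : X) :
    ∫ y, driftWeight V B ε y ∂κ x ≤ 1 + ε / (2 * B) * ((1 - δ) * V x) + ε / 2 := by
  simp only [driftWeight]
  rw [integral_add (integrable_const 1) ((hκ.integrable x).const_mul _), integral_const_mul]
  calc ∫ _, (1 : ℝ) ∂κ x + ε / (2 * B) * ∫ y, V y ∂κ x
      ≤ 1 + ε / (2 * B) * ((1 - δ) * V x + B) := by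
        have := hκ.integral_le x
        gcongr
        simp
    _ = 1 + ε / (2 * B) * ((1 - δ) * V x) + ε / 2 := by field_simp; ring

lemma fDist_driftWeight_le_of_le [IsMarkovKernel κ] (hκ : GeometricDrift V δ B κ)
    (hV0 : ∀ x, 0 ≤ V x) (hδ0 : 0 ≤ δ) (hδ1 : δ ≤ 1) (hB : 0 < B) (hε0 : 0 ≤ ε) (hε1 : ε ≤ 1)
    {η : Measure X} (hη : ε ≤ η.real univ) {x y : X} (hx : η ≤ κ x) (hy : η ≤ κ y) :
    fDist (driftWeight V B ε) (κ x) (κ y)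
      ≤ ENNReal.ofReal ((1 - ε * δ / 4) * (driftWeight V B ε x + driftWeight V B ε y)) := by
  have hint : ∀ z, Integrable (driftWeight V B ε) (κ z) := fun z =>
    integrable_driftWeight (hκ.integrable z) B ε
  have : IsFiniteMeasure η := isFiniteMeasure_of_le _ hx
  have hmass : ε ≤ ∫ z, driftWeight V B ε z ∂η := by
    calc ε ≤ ∫ _, (1 : ℝ) ∂η := by simpa using hη
      _ ≤ ∫ z, driftWeight V B ε z ∂η :=
        integral_mono (integrable_const 1) ((hint x).mono_measure hx)
          (one_le_driftWeight hV0 hB.le hε0)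
  refine (fDist_le_of_common_minorant hx hy (hint x) (hint y)).trans
    (ENNReal.ofReal_le_ofReal ?_)
  have hxint := integral_driftWeight_le hκ hB hε0 x
  have hyint := integral_driftWeight_le hκ hB hε0 y
  have hS : 0 ≤ ε / (2 * B) * (V x + V y) := mul_nonneg (by positivity) (add_nonneg (hV0 x) (hV0 y))
  have hgain : ε * δ / 4 * (ε / (2 * B) * (V x + V y)) ≤ δ * (ε / (2 * B) * (V x + V y)) := by
    gcongr
    nlinarith
  have hεδ : ε * δ ≤ ε := mul_le_of_le_one_right hε0 hδ1
  rw [driftWeight, driftWeight]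
  linarith

lemma fDist_driftWeight_le_of_four_mul_le [IsMarkovKernel κ] (hκ : GeometricDrift V δ B κ)
    (hδ0 : 0 < δ) (hδ1 : δ ≤ 1) (hB : 0 < B) (hε0 : 0 ≤ ε) (hε1 : ε ≤ 1) {x y : X}
    (hxy : 4 * B / δ ≤ V x + V y) :
    fDist (driftWeight V B ε) (κ x) (κ y)
      ≤ ENNReal.ofReal ((1 - ε * δ / 4) * (driftWeight V B ε x + driftWeight V B ε y)) := by
  have hint : ∀ z, Integrable (driftWeight V B ε) (κ z) := fun z =>
    integrable_driftWeight (hκ.integrable z) B ε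
  refine (fDist_le_integral_add_integral (hint x) (hint y)).trans (ENNReal.ofReal_le_ofReal ?_)
  have hxint := integral_driftWeight_le hκ hB hε0 x
  have hyint := integral_driftWeight_le hκ hB hε0 y
  have hS : 2 * ε ≤ δ * (ε / (2 * B) * (V x + V y)) := by
    calc 2 * ε = δ * (ε / (2 * B) * (4 * B / δ)) := by field_simp; ring
      _ ≤ δ * (ε / (2 * B) * (V x + V y)) := by gcongr
  have hgain : ε * (δ * (ε / (2 * B) * (V x + V y))) ≤ δ * (ε / (2 * B) * (V x + V y)) :=
    mul_le_of_le_one_left ((by positivity : 0 ≤ 2 * ε).trans hS) hε1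
  have hεδ : ε * δ ≤ ε := mul_le_of_le_one_right hε0 hδ1
  rw [driftWeight, driftWeight]
  linarith

lemma fDist_driftWeight_comp_le [IsMarkovKernel κ] (hκ : GeometricDrift V δ B κ)
    (hV0 : ∀ x, 0 ≤ V x) (hδ0 : 0 < δ) (hδ1 : δ ≤ 1) (hB : 0 < B) (hε0 : 0 ≤ ε) (hε1 : ε ≤ 1)
    (hsmall : IsSmallSet κ {x | V x ≤ 4 * B / δ} ε) (μ ν : Measure X) [IsProbabilityMeasure μ]
    [IsProbabilityMeasure ν] :
    fDist (driftWeight V B ε) (κ ∘ₘ μ) (κ ∘ₘ ν)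
      ≤ ENNReal.ofReal (1 - ε * δ / 4) * fDist (driftWeight V B ε) μ ν := by
  refine fDist_comp_le_mul_of_forall (by nlinarith)
    (fun x => zero_le_one.trans (one_le_driftWeight hV0 hB.le hε0 x))
    (fun x => integrable_driftWeight (hκ.integrable x) B ε) fun x y => ?_
  obtain ⟨η, hη, hle⟩ := hsmall
  by_cases hx : V x ≤ 4 * B / δ
  · by_cases hy : V y ≤ 4 * B / δ
    · exact fDist_driftWeight_le_of_le hκ hV0 hδ0.le hδ1 hB hε0 hε1 hη (hle x hx) (hle y hy)
    · exact fDist_driftWeight_le_of_four_mul_le hκ hδ0 hδ1 hB hε0 hε1 (by linarith [hV0 x])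
  · exact fDist_driftWeight_le_of_four_mul_le hκ hδ0 hδ1 hB hε0 hε1 (by linarith [hV0 y])

lemma GeometricDrift.integrable_comp (hκ : GeometricDrift V δ B κ)
    (hV : Measurable V) (hV0 : ∀ x, 0 ≤ V x) {μ : Measure X} [IsFiniteMeasure μ]
    (hμ : Integrable V μ) : Integrable V (κ ∘ₘ μ) := by
  refine (Measure.integrable_comp_iff hV.aestronglyMeasurable).2
    ⟨ae_of_all _ hκ.integrable, ?_⟩
  simp only [Real.norm_of_nonneg (hV0 _)]
  refine ((hμ.const_mul (1 - δ)).add (integrable_const B)).mono'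
    (StronglyMeasurable.integral_kernel hV.stronglyMeasurable).aestronglyMeasurable
    (ae_of_all _ fun x => ?_)
  rw [Real.norm_of_nonneg (integral_nonneg hV0)]
  exact hκ.integral_le x

end Harris

section Chain

open Filter Topology

variable {X : Type*} [MeasurableSpace X] {P : ℕ → Kernel X X} [∀ n, IsMarkovKernel (P n)]
  {μ ν : Measure X} [IsProbabilityMeasure μ] [IsProbabilityMeasure ν]

instance isProbabilityMeasure_iterMeasNH (n : ℕ) : IsProbabilityMeasure (iterMeasNH P μ n) := by
  induction n with
  | zero => assumption
  | succ n ih => exact inferInstanceAs (IsProbabilityMeasure (P (n + 1) ∘ₘ iterMeasNH P μ n))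

lemma integrable_iterMeasNH {V : X → ℝ} {δ B : ℝ} (hP : ∀ n, GeometricDrift V δ B (P n))
    (hV : Measurable V) (hV0 : ∀ x, 0 ≤ V x) (hμ : Integrable V μ) (n : ℕ) :
    Integrable V (iterMeasNH P μ n) := by
  induction n with
  | zero => exact hμ
  | succ n ih => exact (hP (n + 1)).integrable_comp hV hV0 ih

lemma fDist_one_iterMeasNH_le (n : ℕ) :
    fDist (fun _ => 1) (iterMeasNH P μ n) (iterMeasNH P ν n) ≤ fDist (fun _ => 1) μ ν := by
  induction n with
  | zero => exact le_rfl
  | succ n ih => exact fDist_one_comp_le.trans ih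

variable {V : X → ℝ} {δ B : ℝ} {ε r : ℕ → ℝ} {π : ℕ → Measure X} [∀ n, IsProbabilityMeasure (π n)]

lemma fDist_driftWeight_iterMeasNH_succ_le (hV0 : ∀ x, 0 ≤ V x)
    (hP : ∀ n, GeometricDrift V δ B (P n)) (hδ0 : 0 < δ) (hδ1 : δ ≤ 1) (hB : 1 ≤ B)
    (hε0 : ∀ n, 0 ≤ ε n) (hε1 : ∀ n, ε n ≤ 1) (hε : Antitone ε)
    (hsmall : ∀ n, IsSmallSet (P n) {x | V x ≤ 4 * B / δ} (ε n))
    (hinv : ∀ n, (P n).Invariant (π n)) (hπV : ∀ n, Integrable V (π n))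
    (hr : ∀ n, fDist (fun x => 1 + V x) (π n) (π (n + 1)) ≤ ENNReal.ofReal (r n)) (n : ℕ) :
    fDist (driftWeight V B (ε (n + 1))) (iterMeasNH P μ (n + 1)) (π (n + 1))
      ≤ ENNReal.ofReal (1 - ε (n + 1) * δ / 4)
        * (fDist (driftWeight V B (ε n)) (iterMeasNH P μ n) (π n) + ENNReal.ofReal (r n)) := by
  have hB0 : 0 < B := one_pos.trans_le hB
  have hweight : ∀ x, driftWeight V B (ε (n + 1)) x ≤ 1 + V x := fun x =>
    add_le_add_right (mul_le_of_le_one_left (hV0 x)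
      ((div_le_one (by positivity)).2 (by linarith [hε1 (n + 1)]))) 1
  calc fDist (driftWeight V B (ε (n + 1))) (iterMeasNH P μ (n + 1)) (π (n + 1))
      = fDist (driftWeight V B (ε (n + 1))) (P (n + 1) ∘ₘ iterMeasNH P μ n)
          (P (n + 1) ∘ₘ π (n + 1)) := by rw [(hinv (n + 1)).def]; rfl
    _ ≤ ENNReal.ofReal (1 - ε (n + 1) * δ / 4)
          * fDist (driftWeight V B (ε (n + 1))) (iterMeasNH P μ n) (π (n + 1)) :=
        fDist_driftWeight_comp_le (hP _) hV0 hδ0 hδ1 hB0 (hε0 _) (hε1 _) (hsmall _) _ _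
    _ ≤ _ := by
        gcongr
        refine (fDist_triangle (integrable_driftWeight (hπV n) B _)).trans (add_le_add ?_ ?_)
        · exact fDist_mono_weight (driftWeight_mono hV0 hB0.le (hε n.le_succ))
        · exact (fDist_mono_weight hweight).trans (hr n)

lemma tendsto_fDist_one_iterMeasNH_of_integrable (hV : Measurable V) (hV0 : ∀ x, 0 ≤ V x)
    (hP : ∀ n, GeometricDrift V δ B (P n)) (hδ0 : 0 < δ) (hδ1 : δ ≤ 1) (hB : 1 ≤ B)
    (hε0 : ∀ n, 0 < ε n) (hε1 : ∀ n, ε n ≤ 1) (hε : Antitone ε)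
    (hsmall : ∀ n, IsSmallSet (P n) {x | V x ≤ 4 * B / δ} (ε n))
    (hinv : ∀ n, (P n).Invariant (π n)) (hπV : ∀ n, Integrable V (π n)) (hr0 : ∀ n, 0 ≤ r n)
    (hr : ∀ n, fDist (fun x => 1 + V x) (π n) (π (n + 1)) ≤ ENNReal.ofReal (r n))
    (hrε : Tendsto (fun n => r n / ε (n + 1)) atTop (𝓝 0))
    (hsum : Tendsto (fun n => ∑ i ∈ Finset.range n, ε (i + 1)) atTop atTop)
    (hμ : Integrable V μ) :
    Tendsto (fun n => fDist (fun _ => 1) (iterMeasNH P μ n) (π n)) atTop (𝓝 0) := by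
  set a : ℕ → ℝ≥0∞ := fun n => fDist (driftWeight V B (ε n)) (iterMeasNH P μ n) (π n)
  have hfin : ∀ n, a n ≠ ∞ := fun n => ne_top_of_le_ne_top ENNReal.ofReal_ne_top
    (fDist_le_integral_add_integral
      (integrable_driftWeight (integrable_iterMeasNH hP hV hV0 hμ n) B _)
      (integrable_driftWeight (hπV n) B _))
  have hθ0 : ∀ n, 0 < ε (n + 1) * δ / 4 := fun n => by have := hε0 (n + 1); positivity
  have hθ1 : ∀ n, ε (n + 1) * δ / 4 ≤ 1 := fun n => by nlinarith [hε0 (n + 1), hε1 (n + 1)]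
  have hrec : ∀ n, (a (n + 1)).toReal ≤ (1 - ε (n + 1) * δ / 4) * (a n).toReal
      + ε (n + 1) * δ / 4 * (4 / δ * (r n / ε (n + 1))) := fun n => by
    have hstep := ENNReal.toReal_mono
      (ENNReal.mul_ne_top ENNReal.ofReal_ne_top
        (ENNReal.add_ne_top.2 ⟨hfin n, ENNReal.ofReal_ne_top⟩))
      (fDist_driftWeight_iterMeasNH_succ_le (μ := μ) hV0 hP hδ0 hδ1 hB (fun n => (hε0 n).le) hε1 hε
        hsmall hinv hπV hr n)
    rw [ENNReal.toReal_mul, ENNReal.toReal_add (hfin n) ENNReal.ofReal_ne_top,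
      ENNReal.toReal_ofReal (sub_nonneg.2 (hθ1 n)), ENNReal.toReal_ofReal (hr0 n)] at hstep
    have hcancel : ε (n + 1) * δ / 4 * (4 / δ * (r n / ε (n + 1))) = r n := by
      have := (hε0 (n + 1)).ne'
      field_simp
    rw [hcancel]
    nlinarith [mul_nonneg (hθ0 n).le (hr0 n)]
  have ha : Tendsto (fun n => (a n).toReal) atTop (𝓝 0) := by
    refine tendsto_zero_of_le_one_sub_mul_add (fun n => ENNReal.toReal_nonneg)
      (fun n => (hθ0 n).le) hθ1 hrec (by simpa using hrε.const_mul (4 / δ)) ?_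
    simp only [mul_div_assoc, ← Finset.sum_mul]
    exact hsum.atTop_mul_const (by positivity)
  refine tendsto_of_tendsto_of_tendsto_of_le_of_le tendsto_const_nhds
    ((ENNReal.tendsto_toReal_zero_iff hfin).1 ha) (fun _ => zero_le) fun n => ?_
  exact fDist_mono_weight (one_le_driftWeight hV0 (zero_le_one.trans hB) (hε0 n).le)

theorem tendsto_fDist_one_iterMeasNH (hV : Measurable V) (hV0 : ∀ x, 0 ≤ V x)
    (hP : ∀ n, GeometricDrift V δ B (P n)) (hδ0 : 0 < δ) (hδ1 : δ ≤ 1) (hB : 1 ≤ B)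
    (hε0 : ∀ n, 0 < ε n) (hε1 : ∀ n, ε n ≤ 1) (hε : Antitone ε)
    (hsmall : ∀ n, IsSmallSet (P n) {x | V x ≤ 4 * B / δ} (ε n))
    (hinv : ∀ n, (P n).Invariant (π n)) (hπV : ∀ n, Integrable V (π n)) (hr0 : ∀ n, 0 ≤ r n)
    (hr : ∀ n, fDist (fun x => 1 + V x) (π n) (π (n + 1)) ≤ ENNReal.ofReal (r n))
    (hrε : Tendsto (fun n => r n / ε (n + 1)) atTop (𝓝 0))
    (hsum : Tendsto (fun n => ∑ i ∈ Finset.range n, ε (i + 1)) atTop atTop) :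
    Tendsto (fun n => fDist (fun _ => 1) (iterMeasNH P μ n) (π n)) atTop (𝓝 0) := by
  refine ENNReal.tendsto_nhds_zero.2 fun e he => ?_
  have he2 : e / 2 ≠ 0 := (ENNReal.half_pos he.ne').ne'
  obtain ⟨ν, hν, hVν, hμν⟩ :=
    exists_isProbabilityMeasure_integrable_fDist_one_le (μ := μ) hV hV0 he2
  have hlim := tendsto_fDist_one_iterMeasNH_of_integrable hV hV0 hP hδ0 hδ1 hB hε0 hε1 hε hsmall
    hinv hπV hr0 hr hrε hsum hVν
  filter_upwards [ENNReal.tendsto_nhds_zero.1 hlim (e / 2) (pos_iff_ne_zero.2 he2)] with n hn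
  calc fDist (fun _ => 1) (iterMeasNH P μ n) (π n)
      ≤ fDist (fun _ => 1) (iterMeasNH P μ n) (iterMeasNH P ν n)
        + fDist (fun _ => 1) (iterMeasNH P ν n) (π n) := fDist_triangle (integrable_const 1)
    _ ≤ e / 2 + e / 2 := add_le_add ((fDist_one_iterMeasNH_le n).trans hμν) hn
    _ = e := ENNReal.add_halves e

end Chain

section LogSchedule

open Filter Topology

/-- The logarithmic cooling schedule `log (n + 1) / c + γbar`, in inverse temperatures. -/
noncomputable def logSchedule (c γbar : ℝ) (n : ℕ) : ℝ := Real.log (n + 1) / c + γbar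

variable {c γbar s : ℝ}

lemma exp_mul_logSchedule (n : ℕ) :
    Real.exp (s * logSchedule c γbar n) = ((n : ℝ) + 1) ^ (s / c) * Real.exp (s * γbar) := by
  rw [logSchedule, mul_add, Real.exp_add, Real.rpow_def_of_pos n.cast_add_one_pos,
    mul_div_left_comm]

lemma le_logSchedule (hc : 0 ≤ c) (n : ℕ) : γbar ≤ logSchedule c γbar n :=
  le_add_of_nonneg_left (div_nonneg (Real.log_nonneg (by simp)) hc)

lemma monotone_logSchedule (hc : 0 ≤ c) : Monotone (logSchedule c γbar) := fun m n h => by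
  unfold logSchedule
  gcongr

lemma logSchedule_succ_sub_le (hc : 0 ≤ c) (n : ℕ) :
    logSchedule c γbar (n + 1) - logSchedule c γbar n ≤ 2 / c * ((n + 1 : ℕ) + 1 : ℝ)⁻¹ := by
  have hn : (0 : ℝ) < n + 1 := n.cast_add_one_pos
  have hlog : Real.log ((n : ℝ) + 1 + 1) - Real.log (n + 1) ≤ 2 * ((n : ℝ) + 1 + 1)⁻¹ := by
    rw [← Real.log_div (by positivity) hn.ne']
    refine (Real.log_le_sub_one_of_pos (by positivity)).trans ?_
    rw [← sub_nonneg]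
    have : 2 * ((n : ℝ) + 1 + 1)⁻¹ - (((n : ℝ) + 1 + 1) / (n + 1) - 1)
        = n / ((n + 1) * (n + 1 + 1)) := by field_simp; ring
    rw [this]
    positivity
  simp only [logSchedule, Nat.cast_add_one, add_sub_add_right_eq_sub, ← sub_div]
  rw [div_mul_eq_mul_div]
  gcongr

lemma tendsto_logSchedule_succ_sub_mul_exp (hs : s < c) (hc : 0 < c) :
    Tendsto (fun n => (logSchedule c γbar (n + 1) - logSchedule c γbar n)
      * Real.exp (s * logSchedule c γbar (n + 1))) atTop (𝓝 0) := by
  have hpow : Tendsto (fun n : ℕ => ((n + 1 : ℕ) + 1 : ℝ) ^ (-(1 - s / c))) atTop (𝓝 0) :=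
    (tendsto_rpow_neg_atTop (sub_pos.2 ((div_lt_one hc).2 hs))).comp <|
      tendsto_atTop_add_const_right _ _ <|
        tendsto_natCast_atTop_atTop.comp (tendsto_add_atTop_nat 1)
  have hlim := hpow.const_mul (2 / c * Real.exp (s * γbar))
  rw [mul_zero] at hlim
  refine squeeze_zero (fun n => mul_nonneg (sub_nonneg.2 (monotone_logSchedule hc.le n.le_succ))
    (Real.exp_pos _).le) (fun n => ?_) hlim
  have hn : (0 : ℝ) < (n + 1 : ℕ) + 1 := Nat.cast_add_one_pos _
  calc (logSchedule c γbar (n + 1) - logSchedule c γbar n)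
        * Real.exp (s * logSchedule c γbar (n + 1))
      ≤ 2 / c * ((n + 1 : ℕ) + 1 : ℝ)⁻¹
        * (((n + 1 : ℕ) + 1 : ℝ) ^ (s / c) * Real.exp (s * γbar)) := by
        rw [exp_mul_logSchedule]
        gcongr
        exact logSchedule_succ_sub_le hc.le n
    _ = 2 / c * Real.exp (s * γbar) * ((n + 1 : ℕ) + 1 : ℝ) ^ (-(1 - s / c)) := by
        rw [neg_sub, Real.rpow_sub_one hn.ne']
        ring

lemma tendsto_sum_exp_neg_mul_logSchedule (hc : 0 < c) (hs : s ≤ c) :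
    Tendsto (fun n => ∑ i ∈ Finset.range n, Real.exp (-s * logSchedule c γbar (i + 1)))
      atTop atTop := by
  have hpow : ¬ Summable fun n : ℕ => ((n + 2 : ℕ) : ℝ) ^ (-s / c) := by
    rw [summable_nat_add_iff (f := fun n : ℕ => (n : ℝ) ^ (-s / c)), Real.summable_nat_rpow,
      not_lt, neg_div, neg_le_neg_iff]
    exact (div_le_one hc).2 hs
  refine (not_summable_iff_tendsto_nat_atTop_of_nonneg fun n => (Real.exp_pos _).le).1 ?_
  have hcast : ∀ n : ℕ, ((n + 1 : ℕ) : ℝ) + 1 = (n + 2 : ℕ) := fun n => by push_cast; ring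
  simp only [exp_mul_logSchedule, hcast]
  rwa [summable_mul_right_iff (Real.exp_pos _).ne']

end LogSchedule

section Reversibility

lemma isReversible_withDensity {X : Type*} [MeasurableSpace X] {ρ : Measure X} [SFinite ρ]
    {κ : Kernel X X} {a : X → X → ℝ≥0∞} {w R : X → ℝ≥0∞} (ha : Measurable (Function.uncurry a))
    (hw : Measurable w) (hR : Measurable R)
    (hκ : ∀ x, κ x = ρ.withDensity (a x) + R x • Measure.dirac x)
    (hsymm : ∀ x y, w x * a x y = w y * a y x) : κ.IsReversible (ρ.withDensity w) := by
  have hflow : ∀ A B : Set X, MeasurableSet A → MeasurableSet B →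
      ∫⁻ x in A, κ x B ∂(ρ.withDensity w)
        = (∫⁻ x in A, ∫⁻ y in B, w x * a x y ∂ρ ∂ρ) + ∫⁻ x in A ∩ B, w x * R x ∂ρ := by
    intro A B hA hB
    have hpoint : ∀ x, w x * κ x B
        = (∫⁻ y in B, w x * a x y ∂ρ) + B.indicator (fun x => w x * R x) x := fun x => by
      rw [lintegral_const_mul _ ha.of_uncurry_left, hκ, Measure.add_apply, withDensity_apply _ hB,
        Measure.smul_apply, Measure.dirac_apply' _ hB, mul_add]
      by_cases hx : x ∈ B <;> simp [hx]
    have hstay : Measurable fun x => w x * R x := hw.mul hR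
    rw [restrict_withDensity hA,
      lintegral_withDensity_eq_lintegral_mul _ hw (κ.measurable_coe hB)]
    simp only [Pi.mul_apply, hpoint]
    rw [lintegral_add_right _ (hstay.indicator hB), lintegral_indicator hB,
      Measure.restrict_restrict hB, inter_comm B A]
  intro A B hA hB
  rw [hflow A B hA hB, hflow B A hB hA, inter_comm B A, lintegral_lintegral_swap]
  · simp_rw [hsymm]
  · exact ((hw.comp measurable_fst).mul ha).aemeasurable

end Reversibility

section MetropolisHastings

variable {f q : ℝ → ℝ} {γ : ℝ}

/-- The Metropolis acceptance probability `α_γ(x, y)` of a proposed move from `x` to `y`. -/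
noncomputable def acceptProb (f : ℝ → ℝ) (γ x y : ℝ) : ℝ := min 1 (Real.exp (-γ * (f y - f x)))

lemma rwmKernel_eq (f q : ℝ → ℝ) (γ x : ℝ) :
    rwmKernel f q γ x
      = volume.withDensity (fun y => ENNReal.ofReal (acceptProb f γ x y * q (y - x)))
        + (∫⁻ y, ENNReal.ofReal ((1 - acceptProb f γ x y) * q (y - x))) • Measure.dirac x :=
  rfl

lemma rwmKernel_sub_const (f q : ℝ → ℝ) (m : ℝ) :
    rwmKernel (fun x => f x - m) q = rwmKernel f q := by
  ext1 γ
  ext1 x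
  simp only [rwmKernel, sub_sub_sub_cancel_right]

lemma acceptProb_nonneg (f : ℝ → ℝ) (γ x y : ℝ) : 0 ≤ acceptProb f γ x y :=
  le_min zero_le_one (Real.exp_pos _).le

lemma acceptProb_le_one (f : ℝ → ℝ) (γ x y : ℝ) : acceptProb f γ x y ≤ 1 :=
  min_le_left _ _

lemma measurable_acceptProb (hf : Measurable f) (γ : ℝ) :
    Measurable fun p : ℝ × ℝ => acceptProb f γ p.1 p.2 := by
  unfold acceptProb
  fun_prop

lemma exp_mul_acceptProb (f : ℝ → ℝ) (γ x y : ℝ) :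
    Real.exp (-γ * f x) * acceptProb f γ x y
      = min (Real.exp (-γ * f x)) (Real.exp (-γ * f y)) := by
  rw [acceptProb, mul_min_of_nonneg _ _ (Real.exp_pos _).le, mul_one, ← Real.exp_add]
  congr 2
  ring

lemma invariant_gibbs_of_eq_rwmKernel (hf : Measurable f) (hq : Measurable q)
    (hqsym : ∀ z, q (-z) = q z) {κ : Kernel ℝ ℝ} [IsMarkovKernel κ]
    (hκ : ∀ x, κ x = rwmKernel f q γ x) : κ.Invariant (gibbs f γ) := by
  have hw : Measurable fun x => ENNReal.ofReal (Real.exp (-γ * f x)) := by fun_prop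
  have hacc := measurable_acceptProb hf γ
  rw [gibbs, ← withDensity_smul _ hw]
  refine (isReversible_withDensity (a := fun x y => ENNReal.ofReal (acceptProb f γ x y * q (y - x)))
    ?_ (hw.const_smul _) (Measurable.lintegral_prod_right' (f := fun p : ℝ × ℝ =>
      ENNReal.ofReal ((1 - acceptProb f γ p.1 p.2) * q (p.2 - p.1))) (by fun_prop))
    (fun x => (hκ x).trans (rwmKernel_eq f q γ x)) fun x y => ?_).invariant
  · exact (hacc.mul (hq.comp (measurable_snd.sub measurable_fst))).ennreal_ofReal
  · simp only [Pi.smul_apply, smul_eq_mul, mul_assoc]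
    rw [← ENNReal.ofReal_mul (Real.exp_pos _).le, ← ENNReal.ofReal_mul (Real.exp_pos _).le,
      ← mul_assoc, ← mul_assoc, exp_mul_acceptProb, exp_mul_acceptProb, min_comm, ← hqsym (y - x),
      neg_sub]

lemma lintegral_rwmKernel (hf : Measurable f) (hq : Measurable q) (hq0 : ∀ z, 0 ≤ q z) (γ x : ℝ)
    {φ : ℝ → ℝ} (hφ : Measurable φ) (hφ0 : ∀ y, 0 ≤ φ y) :
    ∫⁻ y, ENNReal.ofReal (φ y) ∂rwmKernel f q γ x
      = ∫⁻ z, ENNReal.ofReal ((acceptProb f γ x (x + z) * φ (x + z)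
          + (1 - acceptProb f γ x (x + z)) * φ x) * q z) := by
  have hacc : Measurable (acceptProb f γ x) :=
    (measurable_acceptProb hf γ).comp measurable_prodMk_left
  have hmove : Measurable fun y => ENNReal.ofReal (acceptProb f γ x y * q (y - x)) := by fun_prop
  have hstay : Measurable fun y => ENNReal.ofReal ((1 - acceptProb f γ x y) * q (y - x)) := by
    fun_prop
  rw [rwmKernel_eq, lintegral_add_measure, lintegral_smul_measure,
    lintegral_dirac' _ hφ.ennreal_ofReal,
    lintegral_withDensity_eq_lintegral_mul _ hmove hφ.ennreal_ofReal, smul_eq_mul,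
    ← lintegral_mul_const _ hstay, ← lintegral_add_left (hmove.mul hφ.ennreal_ofReal),
    ← lintegral_add_left_eq_self _ x]
  refine lintegral_congr fun z => ?_
  have hacc0 := acceptProb_nonneg f γ x (x + z)
  have hrej0 := sub_nonneg.2 (acceptProb_le_one f γ x (x + z))
  simp only [Pi.mul_apply, add_sub_cancel_left]
  rw [← ENNReal.ofReal_mul (mul_nonneg hacc0 (hq0 z)),
    ← ENNReal.ofReal_mul (mul_nonneg hrej0 (hq0 z)),
    ← ENNReal.ofReal_add (mul_nonneg (mul_nonneg hacc0 (hq0 z)) (hφ0 _))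
      (mul_nonneg (mul_nonneg hrej0 (hq0 z)) (hφ0 x))]
  congr 1
  ring

lemma isProbabilityMeasure_rwmKernel (hf : Measurable f) (hq : Measurable q)
    (hq0 : ∀ z, 0 ≤ q z) (hqint : ∫ z, q z = 1) (γ x : ℝ) :
    IsProbabilityMeasure (rwmKernel f q γ x) := by
  have hmass := lintegral_rwmKernel hf hq hq0 γ x (measurable_const (a := 1)) fun _ => zero_le_one
  simp only [ENNReal.ofReal_one, lintegral_one, mul_one, add_sub_cancel, one_mul] at hmass
  rw [isProbabilityMeasure_iff, hmass, ← ofReal_integral_eq_lintegral_ofReal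
    (integrable_of_integral_eq_one hqint) (ae_of_all _ hq0), hqint, ENNReal.ofReal_one]

lemma integrable_and_integral_rwmKernel_le (hf : Measurable f) (hq : Measurable q)
    (hq0 : ∀ z, 0 ≤ q z) {x : ℝ} {φ U : ℝ → ℝ} (hφ : Measurable φ) (hφ0 : ∀ y, 0 ≤ φ y)
    (hU : Integrable U)
    (hle : ∀ z, (acceptProb f γ x (x + z) * φ (x + z)
      + (1 - acceptProb f γ x (x + z)) * φ x) * q z ≤ U z) :
    Integrable φ (rwmKernel f q γ x) ∧ ∫ y, φ y ∂rwmKernel f q γ x ≤ ∫ z, U z := by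
  have hU0 : ∀ z, 0 ≤ U z := fun z =>
    (mul_nonneg (add_nonneg (mul_nonneg (acceptProb_nonneg ..) (hφ0 _))
      (mul_nonneg (sub_nonneg.2 (acceptProb_le_one ..)) (hφ0 _))) (hq0 z)).trans (hle z)
  have hlint : ∫⁻ y, ENNReal.ofReal (φ y) ∂rwmKernel f q γ x ≤ ENNReal.ofReal (∫ z, U z) := by
    rw [lintegral_rwmKernel hf hq hq0 γ x hφ hφ0,
      ofReal_integral_eq_lintegral_ofReal hU (ae_of_all _ hU0)]
    exact lintegral_mono fun z => ENNReal.ofReal_le_ofReal (hle z)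
  refine ⟨⟨hφ.aestronglyMeasurable, ?_⟩, ?_⟩
  · rw [hasFiniteIntegral_iff_ofReal (ae_of_all _ hφ0)]
    exact hlint.trans_lt ENNReal.ofReal_lt_top
  · rw [integral_eq_lintegral_of_nonneg_ae (ae_of_all _ hφ0) hφ.aestronglyMeasurable]
    exact ENNReal.toReal_le_of_le_ofReal (integral_nonneg hU0) hlint

lemma acceptProb_eq_one (hγ : 0 ≤ γ) {x y : ℝ} (h : f y ≤ f x) : acceptProb f γ x y = 1 :=
  min_eq_left (Real.one_le_exp (by nlinarith))

lemma acceptProb_mul_exp_sub_exp_le (hγ : 1 < γ) (x y : ℝ) :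
    acceptProb f γ x y * (Real.exp (f y) - Real.exp (f x)) ≤ 1 / (γ - 1) * Real.exp (f x) := by
  have hγ' : 0 < γ - 1 := sub_pos.2 hγ
  rcases le_total (f y) (f x) with h | h
  · exact (mul_nonpos_of_nonneg_of_nonpos (acceptProb_nonneg ..)
      (sub_nonpos.2 (Real.exp_le_exp.2 h))).trans (by positivity)
  set t := f y - f x
  have : 0 ≤ t := sub_nonneg.2 h
  have hy : Real.exp (f y) = Real.exp t * Real.exp (f x) := by rw [← Real.exp_add, sub_add_cancel]
  have hexp : Real.exp t - 1 ≤ t * Real.exp t := by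
    have := mul_le_mul_of_nonneg_right (Real.one_sub_le_exp_neg t) (Real.exp_pos t).le
    rw [← Real.exp_add, neg_add_cancel, Real.exp_zero] at this
    linarith
  have hpeak : (γ - 1) * t * Real.exp (-((γ - 1) * t)) ≤ 1 :=
    (Real.mul_exp_neg_le_exp_neg_one _).trans (Real.exp_le_one_iff.2 (by norm_num))
  calc acceptProb f γ x y * (Real.exp (f y) - Real.exp (f x))
      ≤ Real.exp (-γ * t) * (Real.exp (f y) - Real.exp (f x)) := by
        gcongr
        · exact sub_nonneg.2 (Real.exp_le_exp.2 h)
        · exact min_le_right _ _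
    _ = Real.exp (-γ * t) * (Real.exp t - 1) * Real.exp (f x) := by rw [hy]; ring
    _ ≤ Real.exp (-γ * t) * (t * Real.exp t) * Real.exp (f x) := by gcongr
    _ = 1 / (γ - 1) * ((γ - 1) * t * Real.exp (-((γ - 1) * t))) * Real.exp (f x) := by
        rw [show -((γ - 1) * t) = -γ * t + t by ring, Real.exp_add]
        field_simp
    _ ≤ 1 / (γ - 1) * 1 * Real.exp (f x) := by gcongr
    _ = 1 / (γ - 1) * Real.exp (f x) := by rw [mul_one]

lemma integrable_and_integral_exp_rwmKernel_le (hf : Measurable f) (hq : Measurable q)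
    (hq0 : ∀ z, 0 ≤ q z) (hqint : ∫ z, q z = 1) (hγ : 1 < γ) {α x : ℝ} (hα : 0 ≤ α) {J : Set ℝ}
    (hJ : MeasurableSet J) (hdesc : ∀ z ∈ J, f (x + z) ≤ f x - α) :
    Integrable (fun y => Real.exp (f y)) (rwmKernel f q γ x) ∧
      ∫ y, Real.exp (f y) ∂rwmKernel f q γ x
        ≤ (1 + 1 / (γ - 1) - (1 - Real.exp (-α)) * ∫ z in J, q z) * Real.exp (f x) := by
  have hqi : Integrable q := integrable_of_integral_eq_one hqint
  have hmain : Integrable fun z => (1 + 1 / (γ - 1)) * q z := hqi.const_mul _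
  have hgain : Integrable fun z => (1 - Real.exp (-α)) * J.indicator q z :=
    (hqi.indicator hJ).const_mul _
  have hint := integrable_and_integral_rwmKernel_le (γ := γ) (x := x) hf hq hq0 hf.exp
    (fun y => (Real.exp_pos (f y)).le) ((hmain.sub hgain).mul_const (Real.exp (f x))) fun z => ?_
  · rwa [integral_mul_const, integral_sub' hmain hgain, integral_const_mul, integral_const_mul,
      integral_indicator hJ, hqint, mul_one] at hint
  simp only [Pi.sub_apply]
  by_cases hz : z ∈ J
  · have hfz := hdesc z hz
    have hγ0 : 0 ≤ γ := by linarith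
    have hexp : Real.exp (f (x + z)) ≤ Real.exp (-α) * Real.exp (f x) := by
      rw [← Real.exp_add, Real.exp_le_exp]
      linarith
    have hslack : 0 ≤ 1 / (γ - 1) * Real.exp (f x) := by have := sub_pos.2 hγ; positivity
    rw [acceptProb_eq_one hγ0 (by linarith), indicator_of_mem hz]
    nlinarith [hq0 z]
  · have hacc := acceptProb_mul_exp_sub_exp_le (f := f) hγ x (x + z)
    rw [indicator_of_notMem hz, mul_zero, sub_zero]
    nlinarith [hq0 z]

/-- The tail condition of (SA0): outside `[-x₁, x₁]`, `f` grows at rate at least `α` in the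
direction away from the origin. -/
structure TailGrowth (f : ℝ → ℝ) (α x₁ : ℝ) : Prop where
  right : ∀ x y, x₁ ≤ x → x ≤ y → α * (y - x) ≤ f y - f x
  left : ∀ x y, x ≤ -x₁ → y ≤ x → α * (x - y) ≤ f y - f x

variable {α x₁ : ℝ}

lemma TailGrowth.sub_const (h : TailGrowth f α x₁) (m : ℝ) :
    TailGrowth (fun x => f x - m) α x₁ where
  right x y hx hxy := by simpa using h.right x y hx hxy
  left x y hx hxy := by simpa using h.left x y hx hxy

lemma TailGrowth.exists_add_mul_abs_le (h : TailGrowth f α x₁) (hf : Continuous f) (hα : 0 ≤ α) :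
    ∃ m, ∀ x, m + α * |x| ≤ f x := by
  obtain ⟨L, hL⟩ := (isCompact_Icc (a := -|x₁|) (b := |x₁|)).bddBelow_image hf.continuousOn
  have hL' : ∀ x ∈ Icc (-|x₁|) |x₁|, L ≤ f x := fun x hx => hL (mem_image_of_mem f hx)
  have hx₁ := neg_le_self (abs_nonneg x₁)
  refine ⟨L - α * |x₁|, fun x => ?_⟩
  rcases le_total x (-|x₁|) with hx | hx
  · have := h.left (-|x₁|) x (neg_le_neg (le_abs_self x₁)) hx
    rw [abs_of_nonpos (hx.trans (neg_nonpos.2 (abs_nonneg x₁)))]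
    linarith [hL' (-|x₁|) (left_mem_Icc.2 hx₁)]
  rcases le_total x |x₁| with hx' | hx'
  · linarith [hL' x ⟨hx, hx'⟩, mul_le_mul_of_nonneg_left (abs_le.2 ⟨hx, hx'⟩) hα]
  · have := h.right |x₁| x (le_abs_self x₁) hx'
    rw [abs_of_nonneg ((abs_nonneg x₁).trans hx')]
    linarith [hL' |x₁| (right_mem_Icc.2 hx₁)]

lemma TailGrowth.forall_add_le_sub_or (h : TailGrowth f α x₁) (hα : 0 ≤ α) {x : ℝ}
    (hx : |x₁| + 2 ≤ |x|) :
    (∀ z ∈ Icc (-2 : ℝ) (-1), f (x + z) ≤ f x - α) ∨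
      ∀ z ∈ Icc (1 : ℝ) 2, f (x + z) ≤ f x - α := by
  have hx₁ := le_abs_self x₁
  rcases le_abs.1 hx with hx | hx
  · refine Or.inl fun z hz => ?_
    have := h.right (x + z) x (by linarith [hz.1]) (by linarith [hz.2])
    nlinarith [hz.2]
  · refine Or.inr fun z hz => ?_
    have := h.left (x + z) x (by linarith [hz.2]) (by linarith [hz.1])
    nlinarith [hz.1]

lemma setIntegral_Icc_pos (hq : Continuous q) (hqpos : ∀ z, 0 < q z) {a b : ℝ} (hab : a < b) :
    0 < ∫ z in Icc a b, q z := by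
  rw [integral_Icc_eq_integral_Ioc, ← intervalIntegral.integral_of_le hab.le]
  exact intervalIntegral.intervalIntegral_pos_of_pos (hq.intervalIntegrable _ _) hqpos hab

/-- Near the origin only `∫ exp f ∂K_γ(x) ≤ (1 + 1 / (γ - 1)) exp (f x)` is available; the excess is
bounded there, and `B` absorbs it. -/
lemma TailGrowth.geometricDrift_rwmKernel (h : TailGrowth f α x₁) (hf : Measurable f)
    (hq : Measurable q) (hq0 : ∀ z, 0 ≤ q z) (hqint : ∫ z, q z = 1) (hα : 0 ≤ α) (hγ : 1 < γ)
    {δ B : ℝ} (hδ1 : 2 * δ ≤ 1) (hγδ : 1 / (γ - 1) ≤ δ)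
    (hδl : 2 * δ ≤ (1 - Real.exp (-α)) * ∫ z in Icc (-2) (-1), q z)
    (hδr : 2 * δ ≤ (1 - Real.exp (-α)) * ∫ z in Icc 1 2, q z)
    (hB0 : 0 ≤ B) (hB : ∀ x, |x| ≤ |x₁| + 2 → Real.exp (f x) ≤ B) :
    GeometricDrift (fun x => Real.exp (f x)) δ B (rwmKernel f q γ) := by
  have hnear : ∀ x, _ := fun x => integrable_and_integral_exp_rwmKernel_le (x := x) hf hq hq0 hqint
    hγ hα MeasurableSet.empty (by simp)
  refine ⟨fun x => (hnear x).1, fun x => ?_⟩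
  have hfar : ∀ J, MeasurableSet J → (∀ z ∈ J, f (x + z) ≤ f x - α) →
      2 * δ ≤ (1 - Real.exp (-α)) * ∫ z in J, q z →
      ∫ y, Real.exp (f y) ∂rwmKernel f q γ x ≤ (1 - δ) * Real.exp (f x) + B := by
    intro J hJ hdesc hδJ
    refine (integrable_and_integral_exp_rwmKernel_le hf hq hq0 hqint hγ hα hJ hdesc).2.trans ?_
    nlinarith [Real.exp_pos (f x)]
  rcases le_total |x| (|x₁| + 2) with hx | hx
  · have hx' := (hnear x).2
    rw [setIntegral_empty, mul_zero, sub_zero] at hx'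
    nlinarith [hB x hx, Real.exp_pos (f x)]
  · rcases h.forall_add_le_sub_or hα hx with hdesc | hdesc
    exacts [hfar _ measurableSet_Icc hdesc hδl, hfar _ measurableSet_Icc hdesc hδr]

lemma TailGrowth.exists_forall_geometricDrift_rwmKernel (h : TailGrowth f α x₁)
    (hf : Continuous f) (hα : 0 < α) (hq : Continuous q) (hqpos : ∀ z, 0 < q z)
    (hqint : ∫ z, q z = 1) (γ₀ : ℝ) :
    ∃ δ B γbar : ℝ, 0 < δ ∧ δ ≤ 1 ∧ 1 ≤ B ∧ γ₀ ≤ γbar ∧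
      ∀ γ, γbar ≤ γ → GeometricDrift (fun x => Real.exp (f x)) δ B (rwmKernel f q γ) := by
  have hgap : 0 < 1 - Real.exp (-α) := sub_pos.2 (Real.exp_lt_one_iff.2 (neg_lt_zero.2 hα))
  have hl := mul_pos hgap (setIntegral_Icc_pos hq hqpos (a := -2) (b := -1) (by norm_num))
  have hr := mul_pos hgap (setIntegral_Icc_pos hq hqpos (a := 1) (b := 2) (by norm_num))
  obtain ⟨δ, hδ0, hδ⟩ := exists_between (lt_min (half_pos one_pos) (half_pos (lt_min hl hr)))
  obtain ⟨M, hM⟩ := (isCompact_Icc (a := -(|x₁| + 2)) (b := |x₁| + 2)).bddAbove_image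
    (f := fun x => Real.exp (f x)) (by fun_prop)
  simp only [lt_min_iff, lt_div_iff₀' (zero_lt_two (α := ℝ))] at hδ
  obtain ⟨hδ1, hδl, hδr⟩ := hδ
  refine ⟨δ, max 1 M, max γ₀ (1 + 1 / δ), hδ0, by linarith, le_max_left _ _, le_max_left _ _,
    fun γ hγ => ?_⟩
  have hγδ : 1 / δ ≤ γ - 1 := by linarith [(le_max_right γ₀ (1 + 1 / δ)).trans hγ]
  exact h.geometricDrift_rwmKernel hf.measurable hq.measurable (fun z => (hqpos z).le) hqint hα.le
    (sub_pos.1 ((one_div_pos.2 hδ0).trans_le hγδ)) hδ1.le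
    ((one_div_le hδ0 ((one_div_pos.2 hδ0).trans_le hγδ)).1 hγδ) hδl.le hδr.le
    (zero_le_one.trans (le_max_left _ _))
    fun x hx => (hM (mem_image_of_mem _ (abs_le.1 hx))).trans (le_max_right _ _)

lemma isSmallSet_rwmKernel (hγ : 0 ≤ γ) {C S : Set ℝ} (hS : MeasurableSet S)
    {D q₀ : ℝ} (hD0 : 0 ≤ D) (hD : ∀ x ∈ C, ∀ y ∈ S, f y - f x ≤ D) (hq₀ : 0 ≤ q₀)
    (hq : ∀ x ∈ C, ∀ y ∈ S, q₀ ≤ q (y - x)) :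
    IsSmallSet (rwmKernel f q γ) C (q₀ * Real.exp (-D * γ) * volume.real S) := by
  have hmass : 0 ≤ q₀ * Real.exp (-D * γ) := by positivity
  refine ⟨ENNReal.ofReal (q₀ * Real.exp (-D * γ)) • volume.restrict S, ?_, fun x hx => ?_⟩
  · rw [measureReal_ennreal_smul_apply, measureReal_restrict_apply_univ,
      ENNReal.toReal_ofReal hmass]
  rw [rwmKernel_eq, ← withDensity_const, ← withDensity_indicator hS]
  refine le_trans (withDensity_mono (ae_of_all _ fun y => ?_)) (Measure.le_add_right le_rfl)
  by_cases hy : y ∈ S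
  · rw [indicator_of_mem hy, mul_comm]
    refine ENNReal.ofReal_le_ofReal (mul_le_mul (le_min ?_ ?_) (hq x hx y hy) hq₀
      (acceptProb_nonneg ..))
    · exact Real.exp_le_one_iff.2 (by nlinarith)
    · exact Real.exp_le_exp.2 (by nlinarith [hD x hx y hy])
  · simp [indicator_of_notMem hy]

end MetropolisHastings

section Tilted

variable {X : Type*} [MeasurableSpace X] {ρ : Measure X} {u v W : X → ℝ}

lemma integral_exp_mul_of_tilted (hv : Integrable (fun x => Real.exp (v x)) ρ) [NeZero ρ]
    (φ : X → ℝ) :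
    ∫ x, Real.exp (v x) * φ x ∂ρ = (∫ x, Real.exp (v x) ∂ρ) * ∫ x, φ x ∂ρ.tilted v := by
  rw [integral_tilted, ← integral_const_mul]
  refine integral_congr_ae (ae_of_all _ fun x => ?_)
  simp only [smul_eq_mul]
  rw [← mul_assoc, mul_div_cancel₀ _ (integral_exp_pos hv).ne']

/-- With `Z_u = ∫ exp u` and `N_u = ∫ φ exp u`, the difference of the expectations of `φ` is
`((N_u - N_v) - (Z_u - Z_v) * (N_v / Z_v)) / Z_u`, in which only differences of the densities
`exp u` and `exp v` enter. -/
lemma fDist_tilted_le [NeZero ρ] (hu : Integrable (fun x => Real.exp (u x)) ρ)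
    (hv : Integrable (fun x => Real.exp (v x)) ρ) (hW1 : ∀ x, 1 ≤ W x)
    (hWdiff : Integrable (fun x => W x * |Real.exp (u x) - Real.exp (v x)|) ρ)
    (hWv : Integrable W (ρ.tilted v)) :
    fDist W (ρ.tilted u) (ρ.tilted v) ≤ ENNReal.ofReal
      ((∫ x, W x * |Real.exp (u x) - Real.exp (v x)| ∂ρ) * (1 + ∫ x, W x ∂ρ.tilted v)
        / ∫ x, Real.exp (u x) ∂ρ) := by
  have hZ := integral_exp_pos hu
  set A := ∫ x, W x * |Real.exp (u x) - Real.exp (v x)| ∂ρ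
  have hdiff : ∀ φ : X → ℝ, (∀ x, |φ x| ≤ W x) →
      |∫ x, (Real.exp (u x) - Real.exp (v x)) * φ x ∂ρ| ≤ A := by
    intro φ hφW
    rw [← Real.norm_eq_abs]
    refine norm_integral_le_of_norm_le hWdiff (ae_of_all _ fun x => ?_)
    rw [norm_mul, mul_comm, Real.norm_eq_abs, Real.norm_eq_abs]
    exact mul_le_mul_of_nonneg_right (hφW x) (abs_nonneg _)
  refine fDist_le_ofReal fun φ _ hφW hφu hφv => ?_
  have hφv_le : |∫ x, φ x ∂ρ.tilted v| ≤ ∫ x, W x ∂ρ.tilted v := by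
    rw [← Real.norm_eq_abs]
    exact norm_integral_le_of_norm_le hWv (ae_of_all _ hφW)
  have hNdiff := hdiff φ hφW
  have hZdiff := hdiff (fun _ => 1) (fun x => by simpa using hW1 x)
  simp only [mul_one, sub_mul] at hNdiff hZdiff
  have hφu' : Integrable (fun x => Real.exp (u x) * φ x) ρ := (integrable_tilted_iff hu φ).1 hφu
  have hφv' : Integrable (fun x => Real.exp (v x) * φ x) ρ := (integrable_tilted_iff hv φ).1 hφv
  rw [integral_sub hφu' hφv', integral_exp_mul_of_tilted hu,
    integral_exp_mul_of_tilted hv] at hNdiff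
  rw [integral_sub hu hv] at hZdiff
  rw [le_div_iff₀ hZ, mul_add, mul_one]
  set a := ∫ x, φ x ∂ρ.tilted u
  set b := ∫ x, φ x ∂ρ.tilted v
  set Zu := ∫ x, Real.exp (u x) ∂ρ
  set Zv := ∫ x, Real.exp (v x) ∂ρ
  calc |a - b| * Zu = |(a - b) * Zu| := by rw [abs_mul, abs_of_pos hZ]
    _ = |(Zu * a - Zv * b) - (Zu - Zv) * b| := by congr 1; ring
    _ ≤ |Zu * a - Zv * b| + |(Zu - Zv) * b| := abs_sub _ _
    _ ≤ A + A * ∫ x, W x ∂ρ.tilted v := by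
      rw [abs_mul]
      gcongr
      exact (abs_nonneg _).trans hZdiff

end Tilted

section Gibbs

variable {f : ℝ → ℝ} {γ γ' D : ℝ}

lemma gibbs_sub_const (f : ℝ → ℝ) (m : ℝ) : gibbs (fun x => f x - m) = gibbs f := by
  ext1 γ
  set c := ENNReal.ofReal (Real.exp (γ * m))
  have hc0 : c ≠ 0 := by simp [c, Real.exp_pos]
  have hctop : c ≠ ∞ := ENNReal.ofReal_ne_top
  have hexp : ∀ x, ENNReal.ofReal (Real.exp (-γ * (f x - m)))
      = c * ENNReal.ofReal (Real.exp (-γ * f x)) := fun x => by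
    rw [← ENNReal.ofReal_mul (Real.exp_pos _).le, ← Real.exp_add]
    congr 2
    ring
  simp only [gibbs, hexp]
  rw [lintegral_const_mul' _ _ hctop, ENNReal.mul_inv (Or.inl hc0) (Or.inl hctop)]
  change _ • volume.withDensity (c • fun x => ENNReal.ofReal (Real.exp (-γ * f x))) = _
  rw [withDensity_smul' _ _ hctop, smul_smul, mul_right_comm, ENNReal.inv_mul_cancel hc0 hctop,
    one_mul]

lemma gibbs_eq_tilted (hint : Integrable fun x => Real.exp (-γ * f x)) :
    gibbs f γ = volume.tilted fun x => -γ * f x := by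
  have hZ := integral_exp_pos hint
  rw [gibbs, Measure.tilted, ← ofReal_integral_eq_lintegral_ofReal hint
    (ae_of_all _ fun x => (Real.exp_pos _).le), ← withDensity_smul' _ _ (by simpa using hZ)]
  congr 1
  ext1 x
  rw [Pi.smul_apply, smul_eq_mul, ENNReal.ofReal_div_of_pos hZ, mul_comm, div_eq_mul_inv]

lemma integrable_exp_neg_mul_abs {α : ℝ} (hα : 0 < α) :
    Integrable fun x : ℝ => Real.exp (-(α * |x|)) := by
  rw [← integrableOn_univ, ← Iic_union_Ioi (a := (0 : ℝ))]
  refine IntegrableOn.union ((integrableOn_exp_mul_Iic hα 0).congr_fun (fun x hx => ?_)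
    measurableSet_Iic) ((integrableOn_exp_mul_Ioi (neg_lt_zero.2 hα) 0).congr_fun (fun x hx => ?_)
    measurableSet_Ioi)
  · simp only [abs_of_nonpos (mem_Iic.1 hx), mul_neg, neg_neg]
  · simp only [abs_of_pos (mem_Ioi.1 hx), neg_mul]

lemma integrable_exp_neg_mul_of_one_le (hf : Measurable f) (hf0 : ∀ x, 0 ≤ f x)
    (hint : Integrable fun x => Real.exp (-f x)) (hγ : 1 ≤ γ) :
    Integrable fun x => Real.exp (-γ * f x) :=
  hint.mono' (by fun_prop) <| ae_of_all _ fun x => by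
    rw [Real.norm_eq_abs, Real.abs_exp, Real.exp_le_exp]
    nlinarith [hf0 x]

lemma isProbabilityMeasure_gibbs (hint : Integrable fun x => Real.exp (-γ * f x)) :
    IsProbabilityMeasure (gibbs f γ) :=
  gibbs_eq_tilted hint ▸ isProbabilityMeasure_tilted hint

lemma integrable_exp_gibbs (hf : Measurable f) (hf0 : ∀ x, 0 ≤ f x)
    (hint : Integrable fun x => Real.exp (-f x)) (hγ : 2 ≤ γ) :
    Integrable (fun x => Real.exp (f x)) (gibbs f γ) := by
  have hγi := integrable_exp_neg_mul_of_one_le hf hf0 hint (one_le_two.trans hγ)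
  rw [gibbs_eq_tilted hγi, integrable_tilted_iff hγi]
  refine (integrable_exp_neg_mul_of_one_le hf hf0 hint (γ := γ - 1) (by linarith)).congr
    (ae_of_all _ fun x => ?_)
  simp only [smul_eq_mul, ← Real.exp_add]
  congr 1
  ring

lemma exp_neg_mul_le_integral (hint : Integrable fun x => Real.exp (-γ * f x)) (hγ : 0 ≤ γ)
    (hD : ∀ x ∈ Icc (0 : ℝ) 1, f x ≤ D) : Real.exp (-γ * D) ≤ ∫ x, Real.exp (-γ * f x) := by
  calc Real.exp (-γ * D) = ∫ _ in Icc (0 : ℝ) 1, Real.exp (-γ * D) := by simp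
    _ ≤ ∫ x in Icc (0 : ℝ) 1, Real.exp (-γ * f x) :=
      setIntegral_mono_on (by simp) hint.integrableOn measurableSet_Icc fun x hx =>
        Real.exp_le_exp.2 (mul_le_mul_of_nonpos_left (hD x hx) (neg_nonpos.2 hγ))
    _ ≤ ∫ x, Real.exp (-γ * f x) :=
      setIntegral_le_integral hint (ae_of_all _ fun x => (Real.exp_pos _).le)

lemma one_add_exp_mul_abs_sub_exp_le {t : ℝ} (ht : 0 ≤ t) (hγ : 3 ≤ γ) (hγγ' : γ ≤ γ') :
    (1 + Real.exp t) * |Real.exp (-γ * t) - Real.exp (-γ' * t)|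
      ≤ 2 * (γ' - γ) * Real.exp (-t) := by
  have : 0 ≤ γ' - γ := sub_nonneg.2 hγγ'
  have hdec : Real.exp (-γ' * t) ≤ Real.exp (-γ * t) := Real.exp_le_exp.2 (by nlinarith)
  have hdiff : Real.exp (-γ * t) - Real.exp (-γ' * t) ≤ (γ' - γ) * t * Real.exp (-γ * t) := by
    have hfactor : Real.exp (-γ' * t) = Real.exp (-((γ' - γ) * t)) * Real.exp (-γ * t) := by
      rw [← Real.exp_add]
      congr 1
      ring
    rw [hfactor]
    nlinarith [Real.one_sub_le_exp_neg ((γ' - γ) * t), Real.exp_pos (-γ * t)]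
  rw [abs_of_nonneg (sub_nonneg.2 hdec)]
  calc (1 + Real.exp t) * (Real.exp (-γ * t) - Real.exp (-γ' * t))
      ≤ (2 * Real.exp t) * ((γ' - γ) * Real.exp t * Real.exp (-3 * t)) := by
        refine mul_le_mul ?_ (hdiff.trans ?_) (sub_nonneg.2 hdec) (by positivity)
        · linarith [Real.one_le_exp ht]
        · have htexp : t ≤ Real.exp t := by linarith [Real.add_one_le_exp t]
          gcongr
    _ = 2 * (γ' - γ) * (Real.exp t * Real.exp t * Real.exp (-3 * t)) := by ring
    _ = 2 * (γ' - γ) * Real.exp (-t) := by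
      rw [← Real.exp_add, ← Real.exp_add]
      congr 2
      ring

lemma integral_one_add_exp_gibbs_le (hf : Measurable f) (hf0 : ∀ x, 0 ≤ f x)
    (hint : Integrable fun x => Real.exp (-f x)) (hD : ∀ x ∈ Icc (0 : ℝ) 1, f x ≤ D)
    (hγ : 2 ≤ γ) :
    ∫ x, (1 + Real.exp (f x)) ∂gibbs f γ ≤ 2 * (∫ x, Real.exp (-f x)) * Real.exp (D * γ) := by
  have hγi := integrable_exp_neg_mul_of_one_le hf hf0 hint (one_le_two.trans hγ)
  have hZ := exp_neg_mul_le_integral hγi (zero_le_two.trans hγ) hD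
  have hnum : ∫ x, Real.exp (-γ * f x) * (1 + Real.exp (f x)) ≤ ∫ x, 2 * Real.exp (-f x) :=
    integral_mono_of_nonneg (ae_of_all _ fun x => by positivity) (hint.const_mul 2)
      (ae_of_all _ fun x => by
        have hγf : Real.exp (-γ * f x) ≤ Real.exp (-f x) * Real.exp (-f x) := by
          rw [← Real.exp_add, Real.exp_le_exp]
          nlinarith [hf0 x]
        calc Real.exp (-γ * f x) * (1 + Real.exp (f x))
            ≤ Real.exp (-f x) * Real.exp (-f x) * (2 * Real.exp (f x)) := by
              gcongr
              linarith [Real.one_le_exp (hf0 x)]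
          _ = 2 * Real.exp (-f x) := by
              rw [Real.exp_neg]
              field_simp)
  rw [gibbs_eq_tilted hγi]
  rw [integral_exp_mul_of_tilted hγi, integral_const_mul] at hnum
  have hW0 : 0 ≤ ∫ x, (1 + Real.exp (f x)) ∂(volume.tilted fun x => -γ * f x) :=
    integral_nonneg fun x => by positivity
  calc ∫ x, (1 + Real.exp (f x)) ∂(volume.tilted fun x => -γ * f x)
      = Real.exp (-γ * D) * (∫ x, (1 + Real.exp (f x)) ∂(volume.tilted fun x => -γ * f x))
        * Real.exp (D * γ) := by
        rw [mul_right_comm, ← Real.exp_add, show -γ * D + D * γ = 0 by ring, Real.exp_zero, one_mul]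
    _ ≤ 2 * (∫ x, Real.exp (-f x)) * Real.exp (D * γ) := by
        refine mul_le_mul_of_nonneg_right ?_ (Real.exp_pos _).le
        exact (mul_le_mul_of_nonneg_right hZ hW0).trans hnum

lemma fDist_gibbs_le (hf : Measurable f) (hf0 : ∀ x, 0 ≤ f x)
    (hint : Integrable fun x => Real.exp (-f x)) (hD : ∀ x ∈ Icc (0 : ℝ) 1, f x ≤ D)
    (hγ : 3 ≤ γ) (hγγ' : γ ≤ γ') {M : ℝ} (hM : M = 2 * ∫ x, Real.exp (-f x)) :
    fDist (fun x => 1 + Real.exp (f x)) (gibbs f γ) (gibbs f γ')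
      ≤ ENNReal.ofReal ((γ' - γ) * (M * (1 + M) * Real.exp (2 * D * γ'))) := by
  have : 3 ≤ γ' := hγ.trans hγγ'
  have hM0 : 0 ≤ M := hM ▸ mul_nonneg zero_le_two (integral_nonneg fun x => (Real.exp_pos _).le)
  have hD0 : 0 ≤ D := (hf0 0).trans (hD 0 (by simp))
  have hu := integrable_exp_neg_mul_of_one_le hf hf0 hint (γ := γ) (by linarith)
  have hv := integrable_exp_neg_mul_of_one_le hf hf0 hint (γ := γ') (by linarith)
  have hbound : Integrable fun x => 2 * (γ' - γ) * Real.exp (-f x) := hint.const_mul _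
  have hle := fun x => one_add_exp_mul_abs_sub_exp_le (hf0 x) hγ hγγ'
  have hdiff : Integrable fun x =>
      (1 + Real.exp (f x)) * |Real.exp (-γ * f x) - Real.exp (-γ' * f x)| :=
    hbound.mono' (by fun_prop) <| ae_of_all _ fun x => by
      rw [Real.norm_of_nonneg (by positivity)]
      exact hle x
  have hA : ∫ x, (1 + Real.exp (f x)) * |Real.exp (-γ * f x) - Real.exp (-γ' * f x)|
      ≤ (γ' - γ) * M := by
    refine (integral_mono hdiff hbound hle).trans_eq ?_
    rw [integral_const_mul, hM]
    ring
  have hE := integral_one_add_exp_gibbs_le hf hf0 hint hD (γ := γ') (by linarith)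
  have hE' := integrable_exp_gibbs hf hf0 hint (γ := γ') (by linarith)
  have := isProbabilityMeasure_gibbs hv
  have hZ : Real.exp (-γ' * D) ≤ ∫ x, Real.exp (-γ * f x) :=
    (Real.exp_le_exp.2 (by nlinarith)).trans (exp_neg_mul_le_integral hu (by linarith) hD)
  have hG : 1 ≤ Real.exp (D * γ') := Real.one_le_exp (by nlinarith)
  have hW := (integrable_const (1 : ℝ)).add hE'
  rw [← hM] at hE
  rw [gibbs_eq_tilted hv] at hE hW ⊢
  rw [gibbs_eq_tilted hu]
  refine (fDist_tilted_le hu hv (fun x => by simp [Real.exp_nonneg]) hdiff hW).trans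
    (ENNReal.ofReal_le_ofReal ?_)
  have : 0 ≤ γ' - γ := sub_nonneg.2 hγγ'
  calc _ ≤ (γ' - γ) * M * (Real.exp (D * γ') + M * Real.exp (D * γ')) / Real.exp (-γ' * D) := by
        gcongr
    _ = (γ' - γ) * (M * (1 + M) * Real.exp (2 * D * γ')) := by
        rw [neg_mul, Real.exp_neg, show 2 * D * γ' = D * γ' + γ' * D by ring, Real.exp_add]
        field_simp

end Gibbs

section SimulatedAnnealing

open Filter Topology

variable {f q : ℝ → ℝ} {α x₁ D : ℝ} {K : ℝ → Kernel ℝ ℝ}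

lemma exists_forall_isSmallSet_rwmKernel (hα : 0 < α) (hfα : ∀ x, α * |x| ≤ f x)
    (hq : Continuous q) (hqpos : ∀ z, 0 < q z) (hD : ∀ x ∈ Icc (0 : ℝ) 1, f x ≤ D) (L : ℝ) :
    ∃ q₀, 0 < q₀ ∧ q₀ ≤ 1 ∧ ∀ γ, 0 ≤ γ →
      IsSmallSet (rwmKernel f q γ) {x | Real.exp (f x) ≤ L} (q₀ * Real.exp (-D * γ)) := by
  have hf0 : ∀ x, 0 ≤ f x := fun x => (by positivity : 0 ≤ α * |x|).trans (hfα x)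
  have hD0 : 0 ≤ D := (hf0 0).trans (hD 0 (by simp))
  obtain ⟨q₁, hq₁, hq₁q⟩ := isCompact_Icc.exists_forall_le' hq.continuousOn
    (s := Icc (-(1 + L / α)) (1 + L / α)) fun z _ => hqpos z
  refine ⟨min q₁ 1, lt_min hq₁ one_pos, min_le_right _ _, fun γ hγ => ?_⟩
  have hq₀ : ∀ x ∈ {x | Real.exp (f x) ≤ L}, ∀ y ∈ Icc (0 : ℝ) 1, min q₁ 1 ≤ q (y - x) := by
    intro x hx y hy
    have hfL : f x ≤ L := (by linarith [Real.add_one_le_exp (f x)] : f x ≤ Real.exp (f x)).trans hx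
    have hxL : |x| ≤ L / α := (le_div_iff₀' hα).2 ((hfα x).trans hfL)
    have hyx : |y - x| ≤ 1 + L / α :=
      (abs_sub _ _).trans (add_le_add (abs_le.2 ⟨by linarith [hy.1], hy.2⟩) hxL)
    exact (min_le_left _ _).trans (hq₁q _ (abs_le.1 hyx))
  have hsmall := isSmallSet_rwmKernel hγ measurableSet_Icc hD0
    (fun x _ y hy => (sub_le_self _ (hf0 x)).trans (hD y hy)) (lt_min hq₁ one_pos).le hq₀
  simpa using hsmall

theorem tendsto_fDist_one_iterMeasNH_gibbs {δ B q₀ c γbar : ℝ} [∀ γ, IsMarkovKernel (K γ)]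
    {μ : Measure ℝ} [IsProbabilityMeasure μ] (hf : Measurable f) (hf0 : ∀ x, 0 ≤ f x)
    (hint : Integrable fun x => Real.exp (-f x)) (hD : ∀ x ∈ Icc (0 : ℝ) 1, f x ≤ D)
    (hinv : ∀ γ, (K γ).Invariant (gibbs f γ)) (hδ0 : 0 < δ) (hδ1 : δ ≤ 1) (hB : 1 ≤ B)
    (hγbar : 3 ≤ γbar)
    (hdrift : ∀ γ, γbar ≤ γ → GeometricDrift (fun x => Real.exp (f x)) δ B (K γ))
    (hq₀ : 0 < q₀) (hq₀1 : q₀ ≤ 1) (hsmall : ∀ γ, γbar ≤ γ →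
      IsSmallSet (K γ) {x | Real.exp (f x) ≤ 4 * B / δ} (q₀ * Real.exp (-D * γ)))
    (hc : 0 < c) (hDc : 3 * D < c) :
    Tendsto (fun n => fDist (fun _ => 1) (iterMeasNH (fun i => K (logSchedule c γbar i)) μ n)
      (gibbs f (logSchedule c γbar n))) atTop (𝓝 0) := by
  have hD0 : 0 ≤ D := (hf0 0).trans (hD 0 (by simp))
  have hle := le_logSchedule (γbar := γbar) hc.le
  have hmono := monotone_logSchedule (γbar := γbar) hc.le
  have hprob : ∀ n, IsProbabilityMeasure (gibbs f (logSchedule c γbar n)) := fun n =>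
    isProbabilityMeasure_gibbs
      (integrable_exp_neg_mul_of_one_le hf hf0 hint (by linarith [hle n]))
  set M := 2 * ∫ x, Real.exp (-f x) with hM
  have hM0 : 0 ≤ M := mul_nonneg zero_le_two (integral_nonneg fun x => (Real.exp_pos _).le)
  have hr0 : ∀ n, 0 ≤ (logSchedule c γbar (n + 1) - logSchedule c γbar n)
      * (M * (1 + M) * Real.exp (2 * D * logSchedule c γbar (n + 1))) := fun n =>
    mul_nonneg (sub_nonneg.2 (hmono n.le_succ)) (by positivity)
  refine tendsto_fDist_one_iterMeasNH (ε := fun n => q₀ * Real.exp (-D * logSchedule c γbar n))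
    hf.exp (fun x => (Real.exp_pos _).le) (fun n => hdrift _ (hle n)) hδ0 hδ1 hB
    (fun n => by positivity) (fun n => ?_) (fun m n hmn => ?_) (fun n => hsmall _ (hle n))
    (fun n => hinv _) (fun n => integrable_exp_gibbs hf hf0 hint (by linarith [hle n])) hr0
    (fun n => fDist_gibbs_le hf hf0 hint hD (hγbar.trans (hle n)) (hmono n.le_succ) hM) ?_ ?_
  · exact mul_le_one₀ hq₀1 (Real.exp_pos _).le (Real.exp_le_one_iff.2 (by nlinarith [hle n]))
  · have := hmono hmn
    exact mul_le_mul_of_nonneg_left (Real.exp_le_exp.2 (by nlinarith)) hq₀.le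
  · have hlim := (tendsto_logSchedule_succ_sub_mul_exp (γbar := γbar) hDc hc).const_mul
      (M * (1 + M) / q₀)
    rw [mul_zero] at hlim
    refine hlim.congr fun n => ?_
    rw [show 3 * D * logSchedule c γbar (n + 1) = 2 * D * logSchedule c γbar (n + 1)
      + D * logSchedule c γbar (n + 1) by ring, Real.exp_add, neg_mul, Real.exp_neg]
    field_simp
  · have hDc' : D ≤ c := by linarith
    simpa only [← Finset.mul_sum] using
      (tendsto_sum_exp_neg_mul_logSchedule (γbar := γbar) hc hDc').const_mul_atTop hq₀

theorem exists_forall_tendsto_fDist_iterMeasNH_rwmKernel (hf : Continuous f)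
    (h : TailGrowth f α x₁) (hα : 0 < α) (hfα : ∀ x, α * |x| ≤ f x) (hq : Continuous q)
    (hqpos : ∀ z, 0 < q z) (hqsym : ∀ z, q (-z) = q z) (hqint : ∫ z, q z = 1)
    (hK : ∀ γ x, K γ x = rwmKernel f q γ x) :
    ∃ D γbar, 0 < D ∧ 0 ≤ γbar ∧ ∀ c, 3 * D < c → ∀ μ : Measure ℝ, IsProbabilityMeasure μ →
      Tendsto (fun n => fDist (fun _ => 1) (iterMeasNH (fun i => K (logSchedule c γbar i)) μ n)
        (gibbs f (logSchedule c γbar n))) atTop (𝓝 0) := by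
  have hf0 : ∀ x, 0 ≤ f x := fun x => (by positivity : 0 ≤ α * |x|).trans (hfα x)
  have hKf : ∀ γ, ⇑(K γ) = rwmKernel f q γ := fun γ => funext (hK γ)
  have hmarkov : ∀ γ, IsMarkovKernel (K γ) := fun γ => ⟨fun x => hK γ x ▸
    isProbabilityMeasure_rwmKernel hf.measurable hq.measurable (fun z => (hqpos z).le) hqint γ x⟩
  have hint : Integrable fun x => Real.exp (-f x) :=
    (integrable_exp_neg_mul_abs hα).mono' (by fun_prop) <| ae_of_all _ fun x => by
      simpa using hfα x
  obtain ⟨D₀, hD₀⟩ := (isCompact_Icc (a := (0 : ℝ)) (b := 1)).bddAbove_image hf.continuousOn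
  obtain ⟨D, hDpos, hD⟩ : ∃ D, 0 < D ∧ ∀ x ∈ Icc (0 : ℝ) 1, f x ≤ D :=
    ⟨max D₀ 1, by positivity, fun x hx => (hD₀ (mem_image_of_mem f hx)).trans (le_max_left _ _)⟩
  obtain ⟨δ, B, γbar, hδ0, hδ1, hB, hγbar, hdrift⟩ :=
    h.exists_forall_geometricDrift_rwmKernel hf hα hq hqpos hqint 3
  obtain ⟨q₀, hq₀, hq₀1, hsmall⟩ :=
    exists_forall_isSmallSet_rwmKernel hα hfα hq hqpos hD (4 * B / δ)
  refine ⟨D, γbar, hDpos, by linarith, fun c hDc μ _ => ?_⟩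
  exact tendsto_fDist_one_iterMeasNH_gibbs hf.measurable hf0 hint hD
    (fun γ => invariant_gibbs_of_eq_rwmKernel hf.measurable hq.measurable hqsym (hK γ)) hδ0 hδ1 hB
    hγbar (fun γ hγ => hKf γ ▸ hdrift γ hγ) hq₀ hq₀1
    (fun γ hγ => hKf γ ▸ hsmall γ (by linarith)) (by linarith) hDc

end SimulatedAnnealing

theorem simulated_annealing_convergence_general
    (f q : ℝ → ℝ) (hf : Continuous f) (α x₁ : ℝ) (hα : 0 < α)
    (hgrow1 : ∀ x y : ℝ, x₁ ≤ x → x ≤ y → α * (y - x) ≤ f y - f x)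
    (hgrow2 : ∀ x y : ℝ, x ≤ -x₁ → y ≤ x → α * (x - y) ≤ f y - f x)
    (hqc : Continuous q) (hqpos : ∀ y, 0 < q y) (hqsym : ∀ y, q (-y) = q y)
    (hqint : ∫ y, q y = 1)
    (K : ℝ → Kernel ℝ ℝ) (hK : ∀ γ x, K γ x = rwmKernel f q γ x) :
    ∃ d γbar : ℝ, 0 < d ∧ 0 ≤ γbar ∧
      ∀ ξv : ℝ, 0 ≤ ξv →
        ∀ μ : Measure ℝ, IsProbabilityMeasure μ →
          Filter.Tendsto
            (fun n : ℕ =>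
              fDist (fun _ => 1)
                (iterMeasNH (fun i => K (Real.log (i + 1) / (d * (1 + ξv)) + γbar)) μ n)
                (gibbs f (Real.log (n + 1) / (d * (1 + ξv)) + γbar)))
            Filter.atTop (nhds 0) := by
  have hgrow : TailGrowth f α x₁ := ⟨hgrow1, hgrow2⟩
  obtain ⟨m, hm⟩ := hgrow.exists_add_mul_abs_le hf hα.le
  obtain ⟨D, γbar, hD, hγbar, hlim⟩ := exists_forall_tendsto_fDist_iterMeasNH_rwmKernel
    (f := fun x => f x - m) (by fun_prop) (hgrow.sub_const m) hα
    (fun x => le_sub_iff_add_le'.2 (hm x)) hqc hqpos hqsym hqint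
    (fun γ x => (hK γ x).trans (by rw [rwmKernel_sub_const]))
  rw [gibbs_sub_const] at hlim
  exact ⟨4 * D, γbar, by positivity, hγbar, fun ξ hξ μ hμ => hlim _ (by nlinarith) μ hμ⟩

/-- Theorem 12: convergence of simulated annealing. With the logarithmic cooling schedule
`γ_i = log(i+1)/(d(1+ξ)) + γ̄` (for suitable constants `d > 0`, `γ̄ ≥ 0` and any `ξ ≥ 0`),
`‖μ P₁ ⋯ P_n − π_{γ_n}‖_TV → 0` for every initial distribution `μ`, where `P_i = K_{γ_i}`. -/
theorem simulated_annealing_convergence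
    (f q : ℝ → ℝ)
    -- (SA0)
    (hf : ContDiff ℝ 2 f) (α x₁ : ℝ) (hα : 0 < α)
    (hgrow1 : ∀ x y : ℝ, x₁ ≤ x → x ≤ y → α * (y - x) ≤ f y - f x)
    (hgrow2 : ∀ x y : ℝ, x ≤ -x₁ → y ≤ x → α * (x - y) ≤ f y - f x)
    -- (SA1)
    (hSA1 : ∀ x : ℝ, (∀ y, f x ≤ f y) → 0 < deriv (deriv f) x)
    -- (SA2)
    (hqc : Continuous q) (hqpos : ∀ y, 0 < q y) (hqsym : ∀ y, q (-y) = q y)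
    (hqint : ∫ y, q y = 1)
    -- the RWMH kernels, as a measurable kernel family
    (K : ℝ → Kernel ℝ ℝ) (hK : ∀ γ x, K γ x = rwmKernel f q γ x) :
    ∃ d γbar : ℝ, 0 < d ∧ 0 ≤ γbar ∧
      ∀ ξv : ℝ, 0 ≤ ξv →
        ∀ μ : Measure ℝ, IsProbabilityMeasure μ →
          Filter.Tendsto
            (fun n : ℕ =>
              fDist (fun _ => 1)
                (iterMeasNH (fun i => K (Real.log (i + 1) / (d * (1 + ξv)) + γbar)) μ n)
                (gibbs f (Real.log (n + 1) / (d * (1 + ξv)) + γbar)))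
            Filter.atTop (nhds 0) := by
  exact simulated_annealing_convergence_general f q hf.continuous α x₁ hα hgrow1 hgrow2 hqc hqpos
    hqsym hqint K hK
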